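/- arXiv:1310.4528 — 2 statements merged into one kernel-verified Lean document; each statement's English description precedes it below -/
import Mathlib

section
/- Let m ≥ 1, σ ∈ (0,1), let f be a monostable nonlinearity and w the associated heteroclinic, and write ℝ^{m+1}_+ = ℝ^m × (0,∞). Then there exists a constant C > 0 such that: for every g : ℝ^{m+1}_+ → ℝ with ‖g‖_{C^{0,σ}(ℝ^{m+1}_+)} < ∞ there exists a function φ : closure(ℝ^{m+1}_+) → ℝ of class C², depending linearly on g, with Δφ(y,t) + f'(w(t)) φ(y,t) = g(y,t) for all (y,t) ∈ ℝ^m × (0,∞), φ(y,0) = 0 for all y ∈ ℝ^m, and ‖φ‖_{C^{2,σ}(ℝ^{m+1}_+)} ≤ C ‖g‖_{C^{0,σ}(ℝ^{m+1}_+)}. -/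
open Set Filter

/-- A monostable nonlinearity: smooth, `f 0 = f 1 = 0`, positive on `(0,1)`, `f' 1 < 0`. -/
def Monostable (f : ℝ → ℝ) : Prop :=
  ContDiff ℝ (⊤ : ℕ∞) f ∧ f 0 = 0 ∧ f 1 = 0 ∧ (∀ s ∈ Set.Ioo (0 : ℝ) 1, 0 < f s) ∧ deriv f 1 < 0

/-- The heteroclinic associated with `f`. -/
def IsHeteroclinic (f w : ℝ → ℝ) : Prop :=
  ContDiffOn ℝ 2 w (Set.Ici 0) ∧
  (∀ t ∈ Set.Ioi (0 : ℝ),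
    derivWithin (derivWithin w (Set.Ici 0)) (Set.Ici 0) t + f (w t) = 0) ∧
  w 0 = 0 ∧
  Filter.Tendsto w Filter.atTop (nhds 1) ∧
  (∀ t ∈ Set.Ioi (0 : ℝ), 0 < w t) ∧
  StrictMonoOn w (Set.Ici 0) ∧
  (∀ t ∈ Set.Ici (0 : ℝ), 0 < derivWithin w (Set.Ici 0) t)

/-- `sup_Λ ‖h‖ + [h]_{σ,Λ} ≤ K`, componentwise: the `C^{0,σ}(Λ)` norm of `h` is
controlled by `K`. -/
def HolderLe {X Y : Type*} [PseudoMetricSpace X] [NormedAddCommGroup Y]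
    (σ : ℝ) (Λ : Set X) (h : X → Y) (K : ℝ) : Prop :=
  (∀ x ∈ Λ, ‖h x‖ ≤ K) ∧ ∀ x ∈ Λ, ∀ y ∈ Λ, ‖h x - h y‖ ≤ K * dist x y ^ σ

/-- The Laplacian of a function on `ℝ^m × ℝ`, as the sum of second directional
derivatives along the standard basis vectors. -/
noncomputable def lapP {m : ℕ} (u : EuclideanSpace ℝ (Fin m) × ℝ → ℝ)
    (x : EuclideanSpace ℝ (Fin m) × ℝ) : ℝ :=
  (∑ i : Fin m, fderiv ℝ (fun y => fderiv ℝ u y (EuclideanSpace.single i 1, 0)) x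
      (EuclideanSpace.single i 1, 0))
    + fderiv ℝ (fun y => fderiv ℝ u y (0, 1)) x (0, 1)

/-- The closed upper half-space `ℝ^m × [0,∞)`. -/
def halfSpace (m : ℕ) : Set (EuclideanSpace ℝ (Fin m) × ℝ) := {p | 0 ≤ p.2}


open MeasureTheory
open scoped SchwartzMap ContDiff

namespace HS

/-- The ambient space `ℝ^m × ℝ`. -/
abbrev EE (m : ℕ) := EuclideanSpace ℝ (Fin m) × ℝ

instance instHaarEE (m : ℕ) : (volume : Measure (EE m)).IsAddHaarMeasure := by
  rw [MeasureTheory.Measure.volume_eq_prod]; infer_instance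

/-- the Euclidean square norm on the product -/
noncomputable def QQ {m : ℕ} (x : EE m) : ℝ := ‖x.1‖ ^ 2 + x.2 ^ 2

lemma QQ_temperate (m : ℕ) : Function.HasTemperateGrowth (QQ : EE m → ℝ) := by
  have h1 : Function.HasTemperateGrowth (fun x : EE m => ‖x.1‖ ^ 2) :=
    (Function.hasTemperateGrowth_norm_sq (EuclideanSpace ℝ (Fin m))).comp
      (ContinuousLinearMap.fst ℝ (EuclideanSpace ℝ (Fin m)) ℝ).hasTemperateGrowth
  have h2 : Function.HasTemperateGrowth (fun x : EE m => x.2 ^ 2) :=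
    (ContinuousLinearMap.snd ℝ (EuclideanSpace ℝ (Fin m)) ℝ).hasTemperateGrowth.pow 2
  exact h1.add h2

lemma norm_sq_le_QQ {m : ℕ} (x : EE m) : ‖x‖ ^ 2 ≤ QQ x := by
  unfold QQ
  rw [Prod.norm_def]
  rcases le_total ‖x.1‖ ‖x.2‖ with h | h
  · rw [max_eq_right h, Real.norm_eq_abs, sq_abs]; nlinarith [sq_nonneg ‖x.1‖]
  · rw [max_eq_left h]; nlinarith [sq_nonneg x.2]

lemma pow_mul_exp_bdd (M : ℕ) : ∃ C, 0 ≤ C ∧ ∀ s : ℝ, 0 ≤ s →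
    (1 + s) ^ M * Real.exp (-s ^ 2 / 2) ≤ C := by
  refine ⟨4 ^ M * (M.factorial * Real.exp (1 / 2)), by positivity, fun s hs => ?_⟩
  have h := Real.pow_div_factorial_le_exp (x := (1 + s ^ 2) / 2) (by positivity) M
  rw [div_le_iff₀ (by positivity)] at h
  have h1 : (1 + s) ^ M ≤ 4 ^ M * ((1 + s ^ 2) / 2) ^ M := by
    rw [← mul_pow]
    apply pow_le_pow_left₀ (by positivity)
    nlinarith [sq_nonneg (s - 1)]
  have h2 : Real.exp ((1 + s ^ 2) / 2) * Real.exp (-s ^ 2 / 2) = Real.exp (1 / 2) := by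
    rw [← Real.exp_add]; congr 1; ring
  calc (1 + s) ^ M * Real.exp (-s ^ 2 / 2)
      ≤ (4 ^ M * (Real.exp ((1 + s ^ 2) / 2) * M.factorial)) * Real.exp (-s ^ 2 / 2) := by
        gcongr; exact h1.trans (by gcongr)
    _ = 4 ^ M * (M.factorial * (Real.exp ((1 + s ^ 2) / 2) * Real.exp (-s ^ 2 / 2))) := by ring
    _ = _ := by rw [h2]

lemma gauss_decay (m : ℕ) (k n : ℕ) : ∃ C, ∀ x : EE m,
    ‖x‖ ^ k * ‖iteratedFDeriv ℝ n (fun x : EE m => Real.exp (-(1 / 2) * QQ x)) x‖ ≤ C := by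
  obtain ⟨p, C, hC, hQ⟩ := (QQ_temperate m).norm_iteratedFDeriv_le_uniform n
  obtain ⟨B, hB, hexp⟩ := pow_mul_exp_bdd (k + p * n)
  refine ⟨n.factorial * (1 + C) ^ n * B, fun x => ?_⟩
  have hcomp := norm_iteratedFDeriv_comp_le (𝕜 := ℝ) (g := fun s : ℝ => Real.exp (-(1 / 2) * s))
    (f := (QQ : EE m → ℝ)) (n := n) (N := ∞) (by fun_prop) (QQ_temperate m).1
    (by exact_mod_cast le_top) x (C := Real.exp (-(1 / 2) * QQ x)) (D := (1 + C) * (1 + ‖x‖) ^ p)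
    (by
      intro i _
      rw [norm_iteratedFDeriv_eq_norm_iteratedDeriv, iteratedDeriv_exp_const_mul, norm_mul,
        Real.norm_eq_abs (Real.exp _), abs_of_pos (Real.exp_pos _), norm_pow]
      apply mul_le_of_le_one_left (Real.exp_pos _).le
      apply pow_le_one₀ (norm_nonneg _)
      norm_num)
    (by
      intro i hi hin
      refine (hQ i hin x).trans ?_
      have h1 : 1 ≤ (1 + C) * (1 + ‖x‖) ^ p := by
        have : (1 : ℝ) ≤ (1 + ‖x‖) ^ p := one_le_pow₀ (by linarith [norm_nonneg x])
        nlinarith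
      calc C * (1 + ‖x‖) ^ p ≤ (1 + C) * (1 + ‖x‖) ^ p := by gcongr; linarith
        _ ≤ _ := le_self_pow₀ h1 (by omega))
  have heq : ((fun s : ℝ => Real.exp (-(1 / 2) * s)) ∘ (QQ : EE m → ℝ))
    = fun x : EE m => Real.exp (-(1 / 2) * QQ x) := rfl
  rw [heq] at hcomp
  have hx : 0 ≤ ‖x‖ := norm_nonneg x
  calc ‖x‖ ^ k * ‖iteratedFDeriv ℝ n (fun x : EE m => Real.exp (-(1 / 2) * QQ x)) x‖
      ≤ (1 + ‖x‖) ^ k * (n.factorial * Real.exp (-‖x‖ ^ 2 / 2) * ((1 + C) * (1 + ‖x‖) ^ p) ^ n) := by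
        gcongr
        · linarith
        · refine hcomp.trans ?_
          gcongr
          linarith [norm_sq_le_QQ x]
    _ = n.factorial * (1 + C) ^ n * ((1 + ‖x‖) ^ (k + p * n) * Real.exp (-‖x‖ ^ 2 / 2)) := by
        rw [mul_pow, pow_add, pow_mul]; ring
    _ ≤ _ := by gcongr; exact hexp _ hx

/-- unnormalized Gaussian -/
noncomputable def gauss0 (m : ℕ) : 𝓢(EE m, ℝ) where
  toFun := fun x => Real.exp (-(1 / 2) * QQ x)
  smooth' := by
    have := (QQ_temperate m).1
    fun_prop
  decay' := gauss_decay m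

lemma gauss0_apply (m : ℕ) (x : EE m) : gauss0 m x = Real.exp (-(1 / 2) * QQ x) := rfl

lemma gauss0_int_pos (m : ℕ) : 0 < ∫ x, gauss0 m x := by
  apply integral_pos_of_integrable_nonneg_nonzero (x := 0) (gauss0 m).continuous
    (gauss0 m).integrable
  · intro x; exact (Real.exp_pos _).le
  · rw [gauss0_apply]; exact (Real.exp_pos _).ne'

/-- normalized Gaussian -/
noncomputable def gauss (m : ℕ) : 𝓢(EE m, ℝ) := (∫ x, gauss0 m x)⁻¹ • gauss0 m

lemma gauss_apply (m : ℕ) (x : EE m) :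
    gauss m x = (∫ x, gauss0 m x)⁻¹ * Real.exp (-(1 / 2) * QQ x) := rfl

lemma gauss_int (m : ℕ) : ∫ x, gauss m x = 1 := by
  have : ∀ x, gauss m x = (∫ x, gauss0 m x)⁻¹ * gauss0 m x := fun x => rfl
  simp_rw [this]
  rw [integral_const_mul, inv_mul_cancel₀ (gauss0_int_pos m).ne']

lemma gauss_even (m : ℕ) (y : EuclideanSpace ℝ (Fin m)) (t : ℝ) :
    gauss m (y, -t) = gauss m (y, t) := by
  simp [gauss_apply, QQ]

/-- the derivative of a Schwartz function in a fixed direction -/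
noncomputable def pd {m : ℕ} {F : Type*} [NormedAddCommGroup F] [NormedSpace ℝ F]
    (v : EE m) (k : 𝓢(EE m, F)) : 𝓢(EE m, F) :=
  SchwartzMap.evalCLM ℝ (EE m) F v (SchwartzMap.fderivCLM ℝ (EE m) F k)

lemma pd_apply {m : ℕ} {F : Type*} [NormedAddCommGroup F] [NormedSpace ℝ F]
    (v : EE m) (k : 𝓢(EE m, F)) (x : EE m) : pd v k x = fderiv ℝ k x v := by
  rw [pd, SchwartzMap.evalCLM_apply_apply, SchwartzMap.fderivCLM_apply]

/-- the full derivative -/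
noncomputable def fd {m : ℕ} {F : Type*} [NormedAddCommGroup F] [NormedSpace ℝ F]
    (k : 𝓢(EE m, F)) : 𝓢(EE m, EE m →L[ℝ] F) :=
  SchwartzMap.fderivCLM ℝ (EE m) F k

lemma fd_apply {m : ℕ} {F : Type*} [NormedAddCommGroup F] [NormedSpace ℝ F]
    (k : 𝓢(EE m, F)) (x : EE m) : fd k x = fderiv ℝ k x := by
  rw [fd, SchwartzMap.fderivCLM_apply]

/-- horizontal basis vector -/
noncomputable def bh {m : ℕ} (i : Fin m) : EE m := (EuclideanSpace.single i 1, 0)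
/-- vertical basis vector -/
noncomputable def bt {m : ℕ} : EE m := (0, 1)

lemma QQ_eq_sum {m : ℕ} (x : EE m) : QQ x = ∑ i, (x.1 i) ^ 2 + x.2 ^ 2 := by
  rw [QQ, EuclideanSpace.norm_sq_eq]; simp

/-- polar form -/
noncomputable def BB {m : ℕ} (x v : EE m) : ℝ := inner ℝ x.1 v.1 + x.2 * v.2

lemma hasFDerivAt_QQ {m : ℕ} (x v : EE m) : fderiv ℝ (QQ : EE m → ℝ) x v = 2 * BB x v := by
  have h1 : HasFDerivAt (fun x : EE m => ‖x.1‖ ^ 2) _ x :=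
    (hasFDerivAt_fst (𝕜 := ℝ) (p := x)).norm_sq
  have h2 : HasFDerivAt (fun x : EE m => x.2 ^ 2) _ x :=
    (hasFDerivAt_snd (𝕜 := ℝ) (p := x)).pow 2
  have h3 : HasFDerivAt (QQ : EE m → ℝ) _ x := h1.add h2
  rw [h3.fderiv]
  simp [BB]; ring

lemma pd_gauss {m : ℕ} (v x : EE m) : pd v (gauss m) x = - (BB x v) * gauss m x := by
  rw [pd_apply]
  have hd : DifferentiableAt ℝ (QQ : EE m → ℝ) x :=
    ((QQ_temperate m).1.differentiable (by simp)).differentiableAt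
  have h : HasFDerivAt (gauss m) _ x :=
    ((hd.hasFDerivAt.const_mul (-(1 / 2) : ℝ)).exp).const_mul (∫ x, gauss0 m x)⁻¹
  rw [h.fderiv]
  simp [hasFDerivAt_QQ, gauss_apply]; ring

lemma pd_pd_gauss {m : ℕ} (v w x : EE m) : pd w (pd v (gauss m)) x =
    (BB x v * BB x w - BB w v) * gauss m x := by
  rw [pd_apply]
  have h0 : (pd v (gauss m) : EE m → ℝ) = fun x => - (BB x v) * gauss m x := by
    ext x; exact pd_gauss v x
  have hB : HasFDerivAt (fun x : EE m => BB x v) (((innerSL ℝ v.1).comp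
      (ContinuousLinearMap.fst ℝ _ _)) + v.2 • ContinuousLinearMap.snd ℝ _ _) x := by
    have := (((innerSL ℝ v.1).comp
      (ContinuousLinearMap.fst ℝ (EuclideanSpace ℝ (Fin m)) ℝ)) +
        v.2 • ContinuousLinearMap.snd ℝ _ _).hasFDerivAt (x := x)
    convert this using 1
    ext y
    simp [BB, real_inner_comm, mul_comm]
  have hg : HasFDerivAt (gauss m) (fderiv ℝ (gauss m) x) x := (gauss m).hasFDerivAt x
  have h7 : HasFDerivAt (fun x => - (BB x v) * gauss m x) _ x := (hB.neg).mul hg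
  rw [h0, h7.fderiv]
  have h4 := pd_gauss w x
  rw [pd_apply] at h4
  simp [h4, BB, real_inner_comm, mul_comm]
  ring

/-- The Gaussian identity `n ρ + Dρ(z) z = -Δ ρ`. -/
lemma gauss_identity {m : ℕ} (x : EE m) :
    (m + 1 : ℝ) * gauss m x + fderiv ℝ (gauss m) x x =
      - (∑ i : Fin m, pd (bh i) (pd (bh i) (gauss m)) x + pd bt (pd bt (gauss m)) x) := by
  have h4 := pd_gauss x x
  rw [pd_apply] at h4
  rw [h4]
  simp_rw [pd_pd_gauss]
  have h1 : ∀ i : Fin m, BB x (bh i) = x.1 i := by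
    intro i; simp [BB, bh, EuclideanSpace.inner_single_right]
  have h2 : ∀ i : Fin m, BB (bh i : EE m) (bh i) = 1 := by
    intro i; simp [BB, bh]
  have h3 : BB x bt = x.2 := by simp [BB, bt]
  have h5 : BB (bt : EE m) bt = 1 := by simp [BB, bt]
  have h6 : BB x x = ∑ i, (x.1 i) ^ 2 + x.2 ^ 2 := by
    rw [← QQ_eq_sum]; simp [BB, QQ]; ring
  simp_rw [h1, h2, h3, h5, h6]
  rw [← Finset.sum_mul, Finset.sum_sub_distrib]
  simp
  have : ∑ i, (x.1 i) * x.1 i = ∑ i, (x.1 i) ^ 2 := by simp [sq]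
  rw [this]; ring

lemma pd_comm_gauss {m : ℕ} (v w : EE m) :
    pd w (pd v (gauss m)) = pd v (pd w (gauss m)) := by
  ext x
  rw [pd_pd_gauss, pd_pd_gauss]
  have : BB w v = BB v w := by simp [BB, real_inner_comm, mul_comm]
  rw [this]; ring

end HS

open MeasureTheory Set Filter
open scoped SchwartzMap ContDiff

namespace HS

variable {m : ℕ} {F : Type*} [NormedAddCommGroup F] [NormedSpace ℝ F]

/-- weight used for domination -/
noncomputable def wt (m : ℕ) (z : EE m) : ℝ :=
  (1 + ‖z‖) ^ (-((Module.finrank ℝ (EE m) : ℝ) + 1))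

lemma wt_integrable (m : ℕ) : Integrable (wt m) :=
  integrable_one_add_norm (by linarith)

lemma wt_eq (z : EE m) : wt m z = ((1 + ‖z‖) ^ (Module.finrank ℝ (EE m) + 1))⁻¹ := by
  rw [wt, Real.rpow_neg (by positivity)]
  congr 1
  rw [← Real.rpow_natCast]; push_cast; rfl

lemma schwartz_decay (k : 𝓢(EE m, F)) (N : ℕ) : ∃ C, 0 ≤ C ∧ ∀ z, (1 + ‖z‖) ^ N * ‖k z‖ ≤ C := by
  refine ⟨2 ^ N * ((Finset.Iic (N, 0)).sup fun m => SchwartzMap.seminorm ℝ m.1 m.2) k,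
    by positivity, fun z => ?_⟩
  have := SchwartzMap.one_add_le_sup_seminorm_apply (𝕜 := ℝ) (m := (N, 0)) (k := N) (n := 0)
    le_rfl le_rfl k z
  simpa using this

/-- domination under perturbations of the argument -/
lemma schwartz_dom (k : 𝓢(EE m, F)) : ∃ C, 0 ≤ C ∧ ∀ z z' : EE m,
    1 + ‖z‖ ≤ 2 * (1 + ‖z'‖) → (1 + ‖z'‖) * ‖k z'‖ ≤ C * wt m z := by
  obtain ⟨C, hC, h⟩ := schwartz_decay k (Module.finrank ℝ (EE m) + 2)
  refine ⟨2 ^ (Module.finrank ℝ (EE m) + 1) * C, by positivity, fun z z' hz => ?_⟩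
  rw [wt_eq, ← div_eq_mul_inv, le_div_iff₀ (by positivity)]
  have h1 : (1 + ‖z‖) ^ (Module.finrank ℝ (EE m) + 1) ≤
      2 ^ (Module.finrank ℝ (EE m) + 1) * (1 + ‖z'‖) ^ (Module.finrank ℝ (EE m) + 1) := by
    rw [← mul_pow]; gcongr
  calc (1 + ‖z'‖) * ‖k z'‖ * (1 + ‖z‖) ^ (Module.finrank ℝ (EE m) + 1)
      ≤ (1 + ‖z'‖) * ‖k z'‖ *
        (2 ^ (Module.finrank ℝ (EE m) + 1) * (1 + ‖z'‖) ^ (Module.finrank ℝ (EE m) + 1)) := by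
        gcongr
    _ = 2 ^ (Module.finrank ℝ (EE m) + 1) *
        ((1 + ‖z'‖) ^ (Module.finrank ℝ (EE m) + 2) * ‖k z'‖) := by ring
    _ ≤ _ := by gcongr; exact h z'

/-- averaging operator -/
noncomputable def Sk (k : 𝓢(EE m, F)) (g : EE m → ℝ) (r : ℝ) (x : EE m) : F :=
  ∫ z, g (x + r • z) • k z

lemma Sk_aesm (k : 𝓢(EE m, F)) {g : EE m → ℝ} (hg : Measurable g) (r : ℝ) (x : EE m) :
    AEStronglyMeasurable (fun z => g (x + r • z) • k z) volume := by
  have h1 : Measurable fun z : EE m => g (x + r • z) := hg.comp (by fun_prop)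
  exact h1.aestronglyMeasurable.smul k.continuous.aestronglyMeasurable

lemma Sk_integrable (k : 𝓢(EE m, F)) {g : EE m → ℝ} (hg : Measurable g) {K : ℝ}
    (hK : ∀ x, |g x| ≤ K) (r : ℝ) (x : EE m) :
    Integrable (fun z => g (x + r • z) • k z) := by
  refine Integrable.mono' ((k.integrable (μ := volume)).norm.const_mul K) (Sk_aesm k hg r x) ?_
  refine Eventually.of_forall fun z => ?_
  rw [norm_smul]
  gcongr
  exact hK _

/-- L¹ norm of the kernel -/
noncomputable def l1 (k : 𝓢(EE m, F)) : ℝ := ∫ z, ‖k z‖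

lemma l1_nonneg (k : 𝓢(EE m, F)) : 0 ≤ l1 k := integral_nonneg fun _ => norm_nonneg _

lemma Sk_bound (k : 𝓢(EE m, F)) {g : EE m → ℝ} {K : ℝ}
    (hK : ∀ x, |g x| ≤ K) (r : ℝ) (x : EE m) : ‖Sk k g r x‖ ≤ K * l1 k := by
  rw [Sk, l1, ← integral_const_mul]
  refine norm_integral_le_of_norm_le ((k.integrable (μ := volume)).norm.const_mul K) ?_
  refine Eventually.of_forall fun z => ?_
  rw [norm_smul]
  gcongr
  exact hK _

lemma Sk_sm (k : 𝓢(EE m, F)) {g : EE m → ℝ} (hg : Measurable g) (x : EE m) :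
    StronglyMeasurable (fun r => Sk k g r x) := by
  unfold Sk
  apply StronglyMeasurable.integral_prod_right
  have h1 : Measurable fun p : ℝ × EE m => g (x + p.1 • p.2) := hg.comp (by fun_prop)
  have h2 : StronglyMeasurable fun p : ℝ × EE m => k p.2 :=
    (k.continuous.comp continuous_snd).stronglyMeasurable
  exact h1.stronglyMeasurable.smul h2

lemma Sk_shift (k : 𝓢(EE m, F)) (g : EE m → ℝ) {r : ℝ} (hr : r ≠ 0) (x x0 : EE m) :
    Sk k g r x = ∫ z, g (x0 + r • z) • k (z - r⁻¹ • (x - x0)) := by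
  rw [Sk, ← integral_add_right_eq_self (μ := volume)
    (fun z => g (x0 + r • z) • k (z - r⁻¹ • (x - x0))) (r⁻¹ • (x - x0))]
  congr 1
  ext z
  rw [add_sub_cancel_right, smul_add, smul_smul, mul_inv_cancel₀ hr, one_smul]
  congr 2
  abel

lemma Sk_hasFDerivAt (k : 𝓢(EE m, F)) {g : EE m → ℝ} (hg : Measurable g) {K : ℝ}
    (hK : ∀ x, |g x| ≤ K) {r : ℝ} (hr : 0 < r) (x0 : EE m) :
    HasFDerivAt (Sk k g r) (-(r⁻¹ • Sk (fd k) g r x0)) x0 := by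
  have hK0 : 0 ≤ K := (abs_nonneg _).trans (hK 0)
  have he : Sk k g r = fun x => ∫ z, g (x0 + r • z) • k (z - r⁻¹ • (x - x0)) := by
    ext x; exact Sk_shift k g hr.ne' x x0
  obtain ⟨C, hC, hdom⟩ := schwartz_dom (fd k)
  have hmeas : Measurable fun z : EE m => g (x0 + r • z) := hg.comp (by fun_prop)
  have key := hasFDerivAt_integral_of_dominated_of_fderiv_le (𝕜 := ℝ) (μ := (volume : Measure (EE m)))
    (F := fun (x z : EE m) => g (x0 + r • z) • k (z - r⁻¹ • (x - x0)))
    (F' := fun (x z : EE m) => g (x0 + r • z) • (-(r⁻¹ • fd k (z - r⁻¹ • (x - x0)))))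
    (x₀ := x0) (s := Metric.ball x0 r) (bound := fun z => K * (r⁻¹ * (C * wt m z)))
    (Metric.ball_mem_nhds x0 hr)
    (Eventually.of_forall fun x => hmeas.aestronglyMeasurable.smul
      (Continuous.aestronglyMeasurable (by have := k.continuous; fun_prop)))
    (by simpa using Sk_integrable k hg hK r x0)
    (hmeas.aestronglyMeasurable.smul
      (Continuous.aestronglyMeasurable (by have := (fd k).continuous; fun_prop)))
    (Eventually.of_forall fun z x hx => by
      rw [norm_smul, norm_neg, norm_smul, norm_inv, Real.norm_of_nonneg hr.le]
      have hc : ‖r⁻¹ • (x - x0)‖ ≤ 1 := by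
        rw [norm_smul, norm_inv, Real.norm_of_nonneg hr.le, inv_mul_le_iff₀ hr, mul_one]
        exact (mem_ball_iff_norm.1 hx).le
      have h2 := hdom z (z - r⁻¹ • (x - x0)) (by
        have := norm_le_norm_add_norm_sub' z (r⁻¹ • (x - x0))
        have h0 := norm_nonneg (z - r⁻¹ • (x - x0))
        linarith)
      have h3 : ‖fd k (z - r⁻¹ • (x - x0))‖ ≤
          (1 + ‖z - r⁻¹ • (x - x0)‖) * ‖fd k (z - r⁻¹ • (x - x0))‖ :=
        le_mul_of_one_le_left (norm_nonneg _) (by linarith [norm_nonneg (z - r⁻¹ • (x - x0))])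
      have := hK (x0 + r • z)
      rw [Real.norm_eq_abs]
      gcongr
      exact h3.trans h2)
    ((((wt_integrable m).const_mul C).const_mul _).const_mul _)
    (Eventually.of_forall fun z x _ => by
      have h1 : HasFDerivAt (fun x : EE m => z - r⁻¹ • (x - x0))
          (-(r⁻¹ • ContinuousLinearMap.id ℝ (EE m))) x :=
        (((hasFDerivAt_id x).sub_const x0).const_smul r⁻¹).const_sub z
      have h2 : HasFDerivAt (fun x => g (x0 + r • z) • k (z - r⁻¹ • (x - x0))) _ x :=
        ((k.hasFDerivAt (z - r⁻¹ • (x - x0))).comp x h1).const_smul (g (x0 + r • z))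
      refine h2.congr_fderiv ?_
      rw [fd_apply]
      refine ContinuousLinearMap.ext fun v => ?_
      simp)
  rw [he]
  have e : -(r⁻¹ • Sk (fd k) g r x0) =
      ∫ z, g (x0 + r • z) • (-(r⁻¹ • fd k (z - r⁻¹ • (x0 - x0)))) := by
    rw [Sk, ← integral_smul, ← integral_neg]
    congr 1
    funext z
    rw [sub_self, smul_zero, sub_zero, smul_neg, smul_comm]
  rw [e]
  exact key

lemma Sk_hasDerivAt (k k' : 𝓢(EE m, F))
    (hk' : ∀ z, k' z = (m + 1 : ℝ) • k z + fderiv ℝ k z z)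
    {g : EE m → ℝ} (hg : Measurable g) {K : ℝ}
    (hK : ∀ x, |g x| ≤ K) {r0 : ℝ} (hr0 : 0 < r0) (x : EE m) :
    HasDerivAt (fun r => Sk k g r x) (-(r0⁻¹ • Sk k' g r0 x)) r0 := by
  have hK0 : 0 ≤ K := (abs_nonneg _).trans (hK 0)
  obtain ⟨C, hC, hdom⟩ := schwartz_dom (fd k)
  have hmeas : Measurable fun z : EE m => g (x + r0 • z) := hg.comp (by fun_prop)
  have hfin : Module.finrank ℝ (EE m) = m + 1 := by simp [EE]
  set J : ℝ → F := fun τ => ∫ z, g (x + r0 • z) • k (τ • z) with hJ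
  have hJd := hasDerivAt_integral_of_dominated_loc_of_deriv_le (𝕜 := ℝ)
    (μ := (volume : Measure (EE m)))
    (F := fun (τ : ℝ) (z : EE m) => g (x + r0 • z) • k (τ • z))
    (F' := fun (τ : ℝ) (z : EE m) => g (x + r0 • z) • (fd k (τ • z) z))
    (x₀ := 1) (s := Metric.ball 1 (1/2)) (bound := fun z => K * (2 * (C * wt m z)))
    (Metric.ball_mem_nhds _ (by norm_num))
    (Eventually.of_forall fun x => hmeas.aestronglyMeasurable.smul
      (Continuous.aestronglyMeasurable (by have := k.continuous; fun_prop)))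
    (by simpa using Sk_integrable k hg hK r0 x)
    (hmeas.aestronglyMeasurable.smul
      (Continuous.aestronglyMeasurable (by have := (fd k).continuous; fun_prop)))
    (Eventually.of_forall fun z τ hτ => by
      rw [norm_smul, Real.norm_eq_abs]
      have hτ2 : 1 / 2 ≤ τ := by
        rw [Real.ball_eq_Ioo] at hτ; linarith [hτ.1]
      have hn : ‖τ • z‖ = τ * ‖z‖ := by
        rw [norm_smul, Real.norm_of_nonneg (by linarith)]
      have hz := norm_nonneg z
      have h2 := hdom z (τ • z) (by rw [hn]; nlinarith)
      have := hK (x + r0 • z)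
      gcongr
      calc ‖fd k (τ • z) z‖ ≤ ‖fd k (τ • z)‖ * ‖z‖ := ContinuousLinearMap.le_opNorm _ _
        _ ≤ ‖fd k (τ • z)‖ * (2 * (1 + ‖τ • z‖)) := by
            gcongr; rw [hn]; nlinarith
        _ = 2 * ((1 + ‖τ • z‖) * ‖fd k (τ • z)‖) := by ring
        _ ≤ _ := by gcongr)
    ((((wt_integrable m).const_mul C).const_mul _).const_mul _)
    (Eventually.of_forall fun z τ _ => by
      have h1 : HasDerivAt (fun τ : ℝ => τ • z) ((1 : ℝ) • z) τ :=
        (hasDerivAt_id τ).smul_const z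
      have h2 : HasDerivAt (fun τ : ℝ => g (x + r0 • z) • k (τ • z)) _ τ :=
        ((k.hasFDerivAt (τ • z)).comp_hasDerivAt τ h1).const_smul (g (x + r0 • z))
      convert h2 using 1
      rw [fd_apply, one_smul])
  have hJ2 : HasDerivAt J _ 1 := hJd.2
  have hpow : HasDerivAt (fun τ : ℝ => τ ^ (m + 1)) ((m + 1 : ℝ)) 1 := by
    simpa using hasDerivAt_pow (m + 1) (1 : ℝ)
  have hprod := hpow.smul hJ2
  have hτ : HasDerivAt (fun r : ℝ => r0 / r) (-(r0⁻¹)) r0 := by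
    have : HasDerivAt (fun r : ℝ => r0 / r) _ r0 := (hasDerivAt_inv hr0.ne').const_mul r0
    convert this using 1
    field_simp
  have hone : r0 / r0 = 1 := div_self hr0.ne'
  rw [← hone] at hprod
  have hcomp := hprod.scomp r0 hτ
  have hev : (fun r => Sk k g r x) =ᶠ[nhds r0]
      ((fun τ : ℝ => τ ^ (m + 1)) • J) ∘ (fun r : ℝ => r0 / r) := by
    filter_upwards [lt_mem_nhds hr0] with r hr
    have h1 := Measure.integral_comp_smul (volume : Measure (EE m))
      (fun z => g (x + r0 • z) • k ((r0 / r) • z)) (r / r0)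
    have h2 : ∀ z : EE m, g (x + r0 • (r / r0) • z) • k ((r0 / r) • (r / r0) • z) =
        g (x + r • z) • k z := by
      intro z
      rw [smul_smul, smul_smul, mul_div_cancel₀ r hr0.ne']
      have : r0 / r * (r / r0) = 1 := by field_simp
      rw [this, one_smul]
    simp_rw [h2] at h1
    rw [Sk, h1, hfin]
    simp only [Function.comp, Pi.smul_apply', hJ]
    congr 1
    rw [← inv_pow, inv_div, abs_of_pos (by positivity)]
  convert hcomp.congr_of_eventuallyEq hev using 1
  rw [neg_smul]
  congr 2
  rw [hone]
  simp only [one_smul, one_pow, hJ]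
  rw [Sk]
  simp_rw [hk', smul_add, fd_apply]
  rw [integral_add]
  · rw [← integral_smul, add_comm]
    congr 2
    funext z
    rw [smul_comm]
  · have := (Sk_integrable k hg hK r0 x).smul (m + 1 : ℝ)
    refine this.congr (Eventually.of_forall fun z => ?_)
    exact smul_comm _ _ _
  · have := hJd.1
    simpa [fd_apply] using this

end HS

open MeasureTheory Set Filter
open scoped SchwartzMap ContDiff

namespace HS

variable {m : ℕ} {F : Type*} [NormedAddCommGroup F] [NormedSpace ℝ F]

lemma fd_pd (v : EE m) (k : 𝓢(EE m, F)) : fd (pd v k) = pd v (fd k) := by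
  refine SchwartzMap.ext fun x => ?_
  refine ContinuousLinearMap.ext fun w => ?_
  rw [fd_apply, pd_apply]
  have h0 : (pd v k : EE m → F) = fun z => fderiv ℝ k z v := by
    funext z; exact pd_apply v k z
  have h1 : (fd k : EE m → _) = fderiv ℝ k := by
    funext z; exact fd_apply k z
  have hd : DifferentiableAt ℝ (fderiv ℝ k) x := by
    rw [← h1]; exact (fd k).differentiableAt
  rw [h0, h1]
  have h2 : HasFDerivAt (fun z => fderiv ℝ k z v) _ x :=
    hd.hasFDerivAt.clm_apply (hasFDerivAt_const v x)
  rw [h2.fderiv]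
  have hs : IsSymmSndFDerivAt ℝ k x :=
    ((k.smooth 2).contDiffAt).isSymmSndFDerivAt (by simp)
  simpa using hs.eq w v

lemma Sk_fd_apply (k : 𝓢(EE m, F)) {g : EE m → ℝ} (hg : Measurable g) {K : ℝ}
    (hK : ∀ x, |g x| ≤ K) (r : ℝ) (x v : EE m) [CompleteSpace F] :
    Sk (fd k) g r x v = Sk (pd v k) g r x := by
  rw [Sk, Sk, ContinuousLinearMap.integral_apply (Sk_integrable (fd k) hg hK r x)]
  congr 1

/-- weighted `L¹` norm of the kernel -/
noncomputable def l1w (k : 𝓢(EE m, F)) : ℝ := ∫ z, (1 + ‖z‖) * ‖k z‖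

lemma l1w_integrable (k : 𝓢(EE m, F)) : Integrable (fun z : EE m => (1 + ‖z‖) * ‖k z‖) := by
  obtain ⟨C, hC, h⟩ := schwartz_dom k
  refine ((wt_integrable m).const_mul C).mono' ?_ ?_
  · exact Continuous.aestronglyMeasurable (by have := k.continuous; fun_prop)
  · refine Eventually.of_forall fun z => ?_
    rw [Real.norm_of_nonneg (by positivity)]
    exact h z z (by linarith [norm_nonneg z])

lemma l1w_nonneg (k : 𝓢(EE m, F)) : 0 ≤ l1w k :=
  integral_nonneg fun _ => by positivity

lemma l1_le_l1w (k : 𝓢(EE m, F)) : l1 k ≤ l1w k := by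
  refine integral_mono k.integrable.norm (l1w_integrable k) fun z => ?_
  exact le_mul_of_one_le_left (norm_nonneg _) (by linarith [norm_nonneg z])

lemma rpow_le_one_add {s σ : ℝ} (hs : 0 ≤ s) (h0 : 0 ≤ σ) (h1 : σ ≤ 1) : s ^ σ ≤ 1 + s := by
  rcases le_total s 1 with h | h
  · exact (Real.rpow_le_one hs h h0).trans (by linarith)
  · calc s ^ σ ≤ s ^ (1 : ℝ) := Real.rpow_le_rpow_of_exponent_le h h1
      _ = s := Real.rpow_one s
      _ ≤ _ := by linarith

lemma Sk_sub_g (k : 𝓢(EE m, F)) {g g' : EE m → ℝ} (hg : Measurable g) {K : ℝ}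
    (hK : ∀ x, |g x| ≤ K) (hg' : Measurable g') {K' : ℝ}
    (hK' : ∀ x, |g' x| ≤ K') (r : ℝ) (x : EE m) :
    Sk k (fun z => g z - g' z) r x = Sk k g r x - Sk k g' r x := by
  rw [Sk, Sk, Sk, ← integral_sub (Sk_integrable k hg hK r x) (Sk_integrable k hg' hK' r x)]
  simp_rw [sub_smul]

lemma Sk_pd_flat (k : 𝓢(EE m, F)) [CompleteSpace F] {v : EE m} (hv : v.2 = 0)
    {g : EE m → ℝ} (hg : Measurable g) {K : ℝ}
    (hK : ∀ x, |g x| ≤ K) (hflat : ∀ y y' t, g (y, t) = g (y', t)) {r : ℝ} (hr : 0 < r)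
    (x : EE m) : Sk (pd v k) g r x = 0 := by
  have h := Sk_hasFDerivAt k hg hK hr x
  have h2 : HasDerivAt (fun s : ℝ => x + s • v) v 0 := by
    have := ((hasDerivAt_id (0:ℝ)).smul_const v).const_add x
    simpa using this
  have h3 : HasDerivAt (fun s : ℝ => Sk k g r (x + s • v)) _ 0 :=
    HasFDerivAt.comp_hasDerivAt (l := Sk k g r) (f := fun s : ℝ => x + s • v)
      (l' := -(r⁻¹ • Sk (fd k) g r x)) (0:ℝ) (by simpa using h) h2
  have h4 : (fun s : ℝ => Sk k g r (x + s • v)) = fun _ => Sk k g r x := by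
    funext s
    unfold Sk
    congr 1
    funext z
    congr 1
    have e1 : x + s • v + r • z = ((x + s • v + r • z).1, x.2 + r * z.2) := by
      ext <;> simp [hv]
    have e2 : x + r • z = ((x + r • z).1, x.2 + r * z.2) := by
      ext <;> simp
    rw [e1, e2]
    exact hflat _ _ _
  rw [h4] at h3
  have h5 := h3.unique (hasDerivAt_const (0:ℝ) (Sk k g r x))
  rw [neg_apply, smul_apply, Sk_fd_apply k hg hK,
    neg_eq_zero, smul_eq_zero] at h5
  exact h5.resolve_left (inv_ne_zero hr.ne')

/-- The gain from horizontal Hölder regularity. -/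
lemma Sk_gain (k : 𝓢(EE m, F)) [CompleteSpace F] {v : EE m} (hv : v.2 = 0)
    {g : EE m → ℝ} (hg : Measurable g) {K σ : ℝ} (h0 : 0 ≤ σ) (h1 : σ ≤ 1)
    (hK : ∀ x, |g x| ≤ K) (hH : ∀ y y' t, |g (y, t) - g (y', t)| ≤ K * ‖y - y'‖ ^ σ)
    {r : ℝ} (hr : 0 < r) (x : EE m) :
    ‖Sk (pd v k) g r x‖ ≤ K * l1w (pd v k) * r ^ σ := by
  have hK0 : 0 ≤ K := (abs_nonneg _).trans (hK 0)
  set g' : EE m → ℝ := fun z => g (x.1, z.2) with hg'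
  have hmg' : Measurable g' := hg.comp (by fun_prop)
  have e : Sk (pd v k) g r x = Sk (pd v k) (fun z => g z - g' z) r x := by
    rw [Sk_sub_g _ hg hK hmg' (K' := K) (fun z => hK _),
      Sk_pd_flat k hv hmg' (K := K) (fun z => hK _) (fun y y' t => rfl) hr, sub_zero]
  rw [e, Sk]
  have e2 : K * l1w (pd v k) * r ^ σ = ∫ z, (K * r ^ σ) * ((1 + ‖z‖) * ‖pd v k z‖) := by
    rw [integral_const_mul, l1w]; ring
  rw [e2]
  refine norm_integral_le_of_norm_le ((l1w_integrable _).const_mul _) ?_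
  refine Eventually.of_forall fun z => ?_
  rw [norm_smul, Real.norm_eq_abs, ← mul_assoc]
  gcongr
  have h3 := hH (x + r • z).1 x.1 (x + r • z).2
  have h4 : (x + r • z).1 - x.1 = r • z.1 := by simp
  rw [h4, norm_smul, Real.norm_of_nonneg hr.le, Real.mul_rpow hr.le (norm_nonneg _)] at h3
  refine h3.trans ?_
  rw [mul_assoc]
  gcongr
  refine (rpow_le_one_add (norm_nonneg _) h0 h1).trans ?_
  gcongr
  exact norm_fst_le z

lemma Sk_gain_fd (k : 𝓢(EE m, F)) [CompleteSpace F] {v : EE m} (hv : v.2 = 0)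
    {g : EE m → ℝ} (hg : Measurable g) {K σ : ℝ} (h0 : 0 ≤ σ) (h1 : σ ≤ 1)
    (hK : ∀ x, |g x| ≤ K) (hH : ∀ y y' t, |g (y, t) - g (y', t)| ≤ K * ‖y - y'‖ ^ σ)
    {r : ℝ} (hr : 0 < r) (x : EE m) :
    ‖Sk (fd (pd v k)) g r x‖ ≤ K * l1w (fd (pd v k)) * r ^ σ := by
  rw [fd_pd]
  exact Sk_gain (fd k) hv hg h0 h1 hK hH hr x

/-- Lipschitz bound for `Sk`. -/
lemma Sk_lip (k : 𝓢(EE m, F)) {g : EE m → ℝ} (hg : Measurable g) {K : ℝ}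
    (hK : ∀ x, |g x| ≤ K) {r N : ℝ} (hr : 0 < r) (hN : ∀ x, ‖Sk (fd k) g r x‖ ≤ N) (x x' : EE m) :
    ‖Sk k g r x - Sk k g r x'‖ ≤ r⁻¹ * N * ‖x - x'‖ := by
  refine Convex.norm_image_sub_le_of_norm_hasFDerivWithin_le (𝕜 := ℝ) (s := univ)
    (f' := fun x => -(r⁻¹ • Sk (fd k) g r x))
    (fun z _ => (Sk_hasFDerivAt k hg hK hr z).hasFDerivWithinAt) ?_ convex_univ
    (mem_univ _) (mem_univ _)
  intro z _
  rw [norm_neg, norm_smul, norm_inv, Real.norm_of_nonneg hr.le]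
  gcongr
  exact hN z

/-- convergence of averages -/
lemma Sk_approx (k : 𝓢(EE m, ℝ)) (hk : ∫ z, k z = 1) {g : EE m → ℝ} (hg : Measurable g) {K σ A : ℝ}
    (h0 : 0 ≤ σ) (h1 : σ ≤ 1)
    (hK : ∀ x, |g x| ≤ K) (x : EE m) (hA : 0 ≤ A) (hx : ∀ z, |g (x + z) - g x| ≤ A * ‖z‖ ^ σ)
    {r : ℝ} (hr : 0 < r) : |Sk k g r x - g x| ≤ A * l1w k * r ^ σ := by
  have e : Sk k g r x - g x = ∫ z, (g (x + r • z) - g x) • k z := by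
    simp_rw [sub_smul]
    rw [integral_sub (Sk_integrable k hg hK r x) (g := fun z => g x • k z)
      (k.integrable.smul (g x)), integral_smul, hk, Sk]
    simp
  have e2 : A * l1w k * r ^ σ = ∫ z, (A * r ^ σ) * ((1 + ‖z‖) * ‖k z‖) := by
    rw [integral_const_mul, l1w]; ring
  rw [e, e2, ← Real.norm_eq_abs]
  refine norm_integral_le_of_norm_le ((l1w_integrable _).const_mul _) ?_
  refine Eventually.of_forall fun z => ?_
  rw [norm_smul, Real.norm_eq_abs, ← mul_assoc]
  gcongr
  refine (hx (r • z)).trans ?_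
  rw [norm_smul, Real.norm_of_nonneg hr.le, Real.mul_rpow hr.le (norm_nonneg _), mul_assoc]
  gcongr
  exact rpow_le_one_add (norm_nonneg _) h0 h1

end HS

open MeasureTheory Set Filter
open scoped SchwartzMap ContDiff

namespace HS

variable {m : ℕ} {F : Type*} [NormedAddCommGroup F] [NormedSpace ℝ F]

/-- the time weight -/
noncomputable def om (lam s r : ℝ) : ℝ := r ^ s * Real.exp (-(lam / 2) * r ^ 2)

lemma om_nonneg {lam s r : ℝ} (hr : 0 ≤ r) : 0 ≤ om lam s r := by
  unfold om; positivity

lemma om_mul {lam s τ r : ℝ} (hr : 0 < r) : om lam s r * r ^ τ = om lam (s + τ) r := by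
  unfold om; rw [Real.rpow_add hr]; ring

lemma om_inv {lam s r : ℝ} (hr : 0 < r) : om lam s r * r⁻¹ = om lam (s - 1) r := by
  rw [← Real.rpow_neg_one, om_mul hr, sub_eq_add_neg]

lemma om_le {lam s r : ℝ} (hl : 0 < lam) (hr : 0 ≤ r) : om lam s r ≤ r ^ s := by
  unfold om
  refine mul_le_of_le_one_right (by positivity) (Real.exp_le_one_iff.2 ?_)
  nlinarith [sq_nonneg r]

lemma om_meas (lam s : ℝ) : Measurable (om lam s) := by
  unfold om; fun_prop

/-- admissible exponents for integrals over `(a,∞)` -/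
def ok (a s : ℝ) : Prop := 0 < a ∨ (a = 0 ∧ -1 < s)

lemma ok.nonneg {a s : ℝ} (h : ok a s) : 0 ≤ a := by
  rcases h with h | h
  · exact h.le
  · exact h.1.ge

lemma om_integrable {lam a s : ℝ} (hl : 0 < lam) (h : ok a s) :
    IntegrableOn (om lam s) (Ioi a) := by
  rcases h with h | ⟨rfl, h⟩
  · have h1 : IntegrableOn (fun r : ℝ => max (a ^ (s - |s|)) 1 * om lam |s| r) (Ioi a) :=
      ((integrableOn_rpow_mul_exp_neg_mul_sq (by positivity)
        (by linarith [abs_nonneg s])).mono_set (Ioi_subset_Ioi h.le)).const_mul _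
    refine h1.mono' (om_meas lam s).aestronglyMeasurable ?_
    refine (ae_restrict_mem measurableSet_Ioi).mono fun r hr => ?_
    have hr0 : 0 < r := h.trans hr
    rw [Real.norm_of_nonneg (om_nonneg hr0.le)]
    have : om lam s r = r ^ (s - |s|) * om lam |s| r := by
      rw [mul_comm, om_mul hr0]; congr 1; ring
    rw [this]
    have h0 := om_nonneg (lam := lam) (s := |s|) hr0.le
    gcongr
    refine le_trans ?_ (le_max_left _ _)
    exact Real.rpow_le_rpow_of_nonpos h (le_of_lt hr) (by linarith [le_abs_self s])
  · exact integrableOn_rpow_mul_exp_neg_mul_sq (by positivity) h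

/-- moments -/
noncomputable def mom (lam s : ℝ) : ℝ := ∫ r in Ioi (0:ℝ), om lam s r

lemma mom_nonneg (lam s : ℝ) : 0 ≤ mom lam s :=
  setIntegral_nonneg measurableSet_Ioi fun _ hr => om_nonneg (le_of_lt hr)

/-- time integral -/
noncomputable def TI (lam a s : ℝ) (k : 𝓢(EE m, F)) (g : EE m → ℝ) (x : EE m) : F :=
  ∫ r in Ioi a, om lam s r • Sk k g r x

lemma TI_aesm (lam a s : ℝ) (k : 𝓢(EE m, F)) {g : EE m → ℝ} (hg : Measurable g) (x : EE m) :
    AEStronglyMeasurable (fun r => om lam s r • Sk k g r x) (volume.restrict (Ioi a)) :=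
  ((om_meas lam s).stronglyMeasurable.smul (Sk_sm k hg x)).aestronglyMeasurable

lemma om_smul_le {lam s r N τ : ℝ} {V : F} (hr : 0 < r) (hV : ‖V‖ ≤ N * r ^ τ) :
    ‖om lam s r • V‖ ≤ N * om lam (s + τ) r := by
  rw [norm_smul, Real.norm_of_nonneg (om_nonneg hr.le), ← om_mul hr]
  have := om_nonneg (lam := lam) (s := s) hr.le
  calc om lam s r * ‖V‖ ≤ om lam s r * (N * r ^ τ) := by gcongr
    _ = _ := by ring

lemma TI_integrable {lam a s : ℝ} (hl : 0 < lam) (k : 𝓢(EE m, F)) {g : EE m → ℝ}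
    (hg : Measurable g) (x : EE m) {N τ : ℝ} (hok : ok a (s + τ))
    (hN : ∀ r, 0 < r → ‖Sk k g r x‖ ≤ N * r ^ τ) :
    IntegrableOn (fun r => om lam s r • Sk k g r x) (Ioi a) := by
  refine ((om_integrable hl hok).const_mul N).mono' (TI_aesm lam a s k hg x) ?_
  refine (ae_restrict_mem measurableSet_Ioi).mono fun r hr => ?_
  have hr0 : 0 < r := hok.nonneg.trans_lt hr
  exact om_smul_le hr0 (hN r hr0)

lemma TI_bound {lam s : ℝ} (hl : 0 < lam) (k : 𝓢(EE m, F)) {g : EE m → ℝ}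
    (x : EE m) {N τ : ℝ} (hok : -1 < s + τ)
    (hN : ∀ r, 0 < r → ‖Sk k g r x‖ ≤ N * r ^ τ) :
    ‖TI lam 0 s k g x‖ ≤ N * mom lam (s + τ) := by
  rw [TI, mom, ← integral_const_mul]
  refine norm_integral_le_of_norm_le ((om_integrable hl (Or.inr ⟨rfl, hok⟩)).const_mul N) ?_
  refine (ae_restrict_mem measurableSet_Ioi).mono fun r hr => ?_
  exact om_smul_le hr (hN r hr)

lemma TI_trunc {lam s : ℝ} (hl : 0 < lam) (k : 𝓢(EE m, F)) {g : EE m → ℝ}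
    (hg : Measurable g) (x : EE m) {N τ : ℝ} (hok : -1 < s + τ)
    (hN : ∀ r, 0 < r → ‖Sk k g r x‖ ≤ N * r ^ τ) {ε : ℝ} (hε : 0 < ε) :
    ‖TI lam 0 s k g x - TI lam ε s k g x‖ ≤ N / (s + τ + 1) * ε ^ (s + τ + 1) := by
  have hN0 : 0 ≤ N := by
    have := (norm_nonneg _).trans (hN 1 one_pos)
    simpa using this
  have hIntg := TI_integrable hl k hg x (s := s) (a := 0) (Or.inr ⟨rfl, hok⟩) hN
  have e : TI lam 0 s k g x = (∫ r in Ioc 0 ε, om lam s r • Sk k g r x) + TI lam ε s k g x := by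
    rw [TI, TI, ← Ioc_union_Ioi_eq_Ioi hε.le, setIntegral_union (by
      rw [Set.disjoint_left]; intro y hy hy2; exact absurd hy.2 (not_le.2 hy2)) measurableSet_Ioi
      (hIntg.mono_set Ioc_subset_Ioi_self) (hIntg.mono_set (Ioi_subset_Ioi hε.le))]
  rw [e, add_sub_cancel_right]
  have e2 : N / (s + τ + 1) * ε ^ (s + τ + 1) = ∫ r in Ioc 0 ε, N * r ^ (s + τ) := by
    rw [integral_const_mul, ← intervalIntegral.integral_of_le hε.le,
      integral_rpow (Or.inl hok), Real.zero_rpow (by linarith)]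
    ring
  rw [e2]
  refine norm_integral_le_of_norm_le ?_ ?_
  · have := (intervalIntegral.intervalIntegrable_rpow' (a := 0) (b := ε) hok).1.const_mul N
    exact this
  · refine (ae_restrict_mem measurableSet_Ioc).mono fun r hr => ?_
    refine (om_smul_le hr.1 (hN r hr.1)).trans ?_
    gcongr
    exact om_le hl hr.1.le

lemma TI_hasFDerivAt {lam a s : ℝ} (hl : 0 < lam) (k : 𝓢(EE m, F)) {g : EE m → ℝ}
    (hg : Measurable g) {K : ℝ} (hK : ∀ x, |g x| ≤ K) (x : EE m) {N τ N' τ' : ℝ}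
    (hok : ok a (s + τ))
    (hN : ∀ r, 0 < r → ‖Sk k g r x‖ ≤ N * r ^ τ) (hok' : ok a (s - 1 + τ'))
    (hN' : ∀ r, 0 < r → ∀ x, ‖Sk (fd k) g r x‖ ≤ N' * r ^ τ') :
    HasFDerivAt (TI lam a s k g) (-TI lam a (s - 1) (fd k) g x) x := by
  have key := hasFDerivAt_integral_of_dominated_of_fderiv_le (𝕜 := ℝ)
    (μ := (volume.restrict (Ioi a)))
    (F := fun (x : EE m) (r : ℝ) => om lam s r • Sk k g r x)
    (F' := fun (x : EE m) (r : ℝ) => -(om lam (s - 1) r • Sk (fd k) g r x))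
    (x₀ := x) (s := univ) (bound := fun r => N' * om lam (s - 1 + τ') r)
    univ_mem
    (Eventually.of_forall fun x => TI_aesm lam a s k hg x)
    (TI_integrable hl k hg x hok hN)
    (TI_aesm lam a (s - 1) (fd k) hg x).neg
    ((ae_restrict_mem measurableSet_Ioi).mono fun r hr x _ => by
      have hr0 : 0 < r := hok.nonneg.trans_lt hr
      rw [norm_neg]
      exact om_smul_le hr0 (hN' r hr0 x))
    ((om_integrable hl hok').const_mul N')
    ((ae_restrict_mem measurableSet_Ioi).mono fun r hr x _ => by
      have hr0 : 0 < r := hok.nonneg.trans_lt hr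
      have h := (Sk_hasFDerivAt k hg hK hr0 x).const_smul (om lam s r)
      rw [smul_neg, smul_smul, om_inv hr0] at h
      exact h)
  rw [integral_neg] at key
  exact key

lemma TI_hol {lam σ : ℝ} (hl : 0 < lam) (h0 : 0 < σ) (h1 : σ < 1) (k : 𝓢(EE m, F)) {g : EE m → ℝ}
    (hg : Measurable g) {K : ℝ} (hK : ∀ x, |g x| ≤ K) {N N' : ℝ}
    (hN : ∀ r, 0 < r → ∀ x, ‖Sk k g r x‖ ≤ N * r ^ σ)
    (hN' : ∀ r, 0 < r → ∀ x, ‖Sk (fd k) g r x‖ ≤ N' * r ^ σ) (x x' : EE m) :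
    ‖TI lam 0 (-1) k g x - TI lam 0 (-1) k g x'‖ ≤
      (2 * N / σ + N' / (1 - σ)) * ‖x - x'‖ ^ σ := by
  rcases eq_or_ne x x' with rfl | hne
  · simp [Real.zero_rpow h0.ne']
  set d := ‖x - x'‖ with hd
  have hd0 : 0 < d := norm_pos_iff.2 (sub_ne_zero.2 hne)
  have hN0 : 0 ≤ N := by simpa using (norm_nonneg _).trans (hN 1 one_pos 0)
  have hN0' : 0 ≤ N' := by simpa using (norm_nonneg _).trans (hN' 1 one_pos 0)
  have hi : ∀ x, IntegrableOn (fun r => om lam (-1) r • Sk k g r x) (Ioi 0) := fun x =>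
    TI_integrable hl k hg x (N := N) (τ := σ) (Or.inr ⟨rfl, by linarith⟩) (fun r hr => hN r hr x)
  have e : TI lam 0 (-1) k g x - TI lam 0 (-1) k g x' =
      ∫ r in Ioi (0:ℝ), (om lam (-1) r • Sk k g r x - om lam (-1) r • Sk k g r x') := by
    rw [integral_sub (hi x) (hi x')]; rfl
  have hi2 : IntegrableOn (fun r => om lam (-1) r • Sk k g r x - om lam (-1) r • Sk k g r x')
    (Ioi 0) := (hi x).sub (hi x')
  rw [e, ← Ioc_union_Ioi_eq_Ioi hd0.le, setIntegral_union (by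
      rw [Set.disjoint_left]; intro y hy hy2; exact absurd hy.2 (not_le.2 hy2)) measurableSet_Ioi
      (hi2.mono_set Ioc_subset_Ioi_self) (hi2.mono_set (Ioi_subset_Ioi hd0.le))]
  have b1 : ‖∫ r in Ioc 0 d, (om lam (-1) r • Sk k g r x - om lam (-1) r • Sk k g r x')‖ ≤
      2 * N / σ * d ^ σ := by
    have e2 : 2 * N / σ * d ^ σ = ∫ r in Ioc 0 d, 2 * N * r ^ (-1 + σ) := by
      rw [integral_const_mul, ← intervalIntegral.integral_of_le hd0.le,
        integral_rpow (Or.inl (by linarith)), Real.zero_rpow (by linarith)]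
      have : -1 + σ + 1 = σ := by ring
      rw [this]
      ring
    rw [e2]
    refine norm_integral_le_of_norm_le ?_ ?_
    · exact (intervalIntegral.intervalIntegrable_rpow' (a := 0) (b := d)
        (by linarith)).1.const_mul _
    · refine (ae_restrict_mem measurableSet_Ioc).mono fun r hr => ?_
      have t1 := om_smul_le (lam := lam) (s := -1) hr.1 (hN r hr.1 x)
      have t2 := om_smul_le (lam := lam) (s := -1) hr.1 (hN r hr.1 x')
      have t3 : N * om lam (-1 + σ) r ≤ N * r ^ (-1 + σ) := by
        gcongr; exact om_le hl hr.1.le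
      refine (norm_sub_le _ _).trans ?_
      linarith
  have b2 : ‖∫ r in Ioi d, (om lam (-1) r • Sk k g r x - om lam (-1) r • Sk k g r x')‖ ≤
      N' / (1 - σ) * d ^ σ := by
    have e2 : N' / (1 - σ) * d ^ σ = ∫ r in Ioi d, N' * d * r ^ (-2 + σ) := by
      rw [integral_const_mul, integral_Ioi_rpow_of_lt (by linarith) hd0]
      have : d ^ σ = d * d ^ (-2 + σ + 1) := by
        rw [← Real.rpow_one_add' hd0.le (by linarith)]; congr 1; ring
      rw [this]
      have h2 : (1 - σ) ≠ 0 := by linarith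
      have h3 : (-2 + σ + 1) ≠ 0 := by linarith
      field_simp
      ring
    rw [e2]
    refine norm_integral_le_of_norm_le ?_ ?_
    · exact (integrableOn_Ioi_rpow_of_lt (by linarith) hd0).const_mul _
    · refine (ae_restrict_mem measurableSet_Ioi).mono fun r hr => ?_
      have hr0 : 0 < r := hd0.trans hr
      have t1 := Sk_lip k hg hK hr0 (hN' r hr0) x x'
      have t2 : ‖Sk k g r x - Sk k g r x'‖ ≤ N' * d * r ^ (-1 + σ) := by
        refine t1.trans (le_of_eq ?_)
        rw [Real.rpow_add hr0, Real.rpow_neg_one]; ring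
      rw [← smul_sub]
      refine (om_smul_le hr0 t2).trans ?_
      have : (-1 : ℝ) + (-1 + σ) = -2 + σ := by ring
      rw [this]
      gcongr
      exact om_le hl hr0.le
  refine (norm_add_le _ _).trans ?_
  rw [add_mul]
  exact add_le_add b1 b2

lemma TI_fd_apply {lam a s : ℝ} (hl : 0 < lam) [CompleteSpace F] (k : 𝓢(EE m, F)) {g : EE m → ℝ}
    (hg : Measurable g) {K : ℝ} (hK : ∀ x, |g x| ≤ K) (x v : EE m) {N τ : ℝ}
    (hok : ok a (s + τ))
    (hN : ∀ r, 0 < r → ‖Sk (fd k) g r x‖ ≤ N * r ^ τ) :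
    TI lam a s (fd k) g x v = TI lam a s (pd v k) g x := by
  rw [TI, TI, ContinuousLinearMap.integral_apply (TI_integrable hl (fd k) hg x hok hN)]
  congr 1
  funext r
  rw [smul_apply, Sk_fd_apply k hg hK]

end HS

open MeasureTheory Set Filter
open scoped SchwartzMap ContDiff

namespace HS

variable {m : ℕ}

/-- horizontally Hölder bounded data -/
structure Dat (σ K : ℝ) (g : EE m → ℝ) : Prop where
  meas : Measurable g
  bd : ∀ x, |g x| ≤ K
  hy : ∀ y y' t, |g (y, t) - g (y', t)| ≤ K * ‖y - y'‖ ^ σ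

/-- the potential -/
noncomputable def UU (lam : ℝ) (g : EE m → ℝ) (x : EE m) : ℝ := TI lam 0 1 (gauss m) g x
/-- its first derivatives -/
noncomputable def PP (lam : ℝ) (g : EE m → ℝ) (v x : EE m) : ℝ := -TI lam 0 0 (pd v (gauss m)) g x
/-- its second derivatives -/
noncomputable def RR (lam : ℝ) (g : EE m → ℝ) (v w x : EE m) : ℝ :=
  TI lam 0 (-1) (pd w (pd v (gauss m))) g x

lemma Sk_bound0 {F : Type*} [NormedAddCommGroup F] [NormedSpace ℝ F] (k : 𝓢(EE m, F))
    {g : EE m → ℝ} {K : ℝ}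
    (hK : ∀ x, |g x| ≤ K) (r : ℝ) (x : EE m) : ‖Sk k g r x‖ ≤ K * l1 k * r ^ (0 : ℝ) := by
  rw [Real.rpow_zero, mul_one]; exact Sk_bound k hK r x

lemma UU_bound {lam K : ℝ} (hl : 0 < lam) {g : EE m → ℝ} (hK : ∀ x, |g x| ≤ K) (x : EE m) :
    |UU lam g x| ≤ K * (l1 (gauss m) * mom lam 1) := by
  have := TI_bound hl (gauss m) x (s := 1) (by norm_num) (fun r _ => Sk_bound0 (gauss m) hK r x)
  rw [add_zero, Real.norm_eq_abs, mul_assoc] at this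
  exact this

lemma UU_hasFDerivAt {lam K : ℝ} (hl : 0 < lam) {g : EE m → ℝ} (hg : Measurable g)
    (hK : ∀ x, |g x| ≤ K) (x : EE m) :
    HasFDerivAt (UU lam g) (-TI lam 0 0 (fd (gauss m)) g x) x := by
  have := TI_hasFDerivAt hl (gauss m) (a := 0) (s := 1) hg hK x (Or.inr ⟨rfl, by norm_num⟩)
    (fun r _ => Sk_bound0 (gauss m) hK r x) (Or.inr ⟨rfl, by norm_num⟩)
    (fun r _ x => Sk_bound0 (fd (gauss m)) hK r x)
  rw [sub_self] at this
  exact this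

lemma UU_fderiv_apply {lam K : ℝ} (hl : 0 < lam) {g : EE m → ℝ} (hg : Measurable g)
    (hK : ∀ x, |g x| ≤ K) (x v : EE m) : fderiv ℝ (UU lam g) x v = PP lam g v x := by
  rw [(UU_hasFDerivAt hl hg hK x).fderiv, neg_apply, PP,
    TI_fd_apply hl (gauss m) hg hK x v (Or.inr ⟨rfl, by norm_num⟩)
      (fun r _ => Sk_bound0 (fd (gauss m)) hK r x)]

lemma UU_fderiv_bound {lam K : ℝ} (hl : 0 < lam) {g : EE m → ℝ}
    (hK : ∀ x, |g x| ≤ K) (x : EE m) :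
    ‖-TI lam 0 0 (fd (gauss m)) g x‖ ≤ K * (l1 (fd (gauss m)) * mom lam 0) := by
  have := TI_bound hl (fd (gauss m)) x (s := 0) (by norm_num)
    (fun r _ => Sk_bound0 (fd (gauss m)) hK r x)
  rw [add_zero, mul_assoc] at this
  rw [norm_neg]
  exact this

/-- interpolation -/
lemma interp {a b d X σ : ℝ} (h0 : 0 < σ) (h1 : σ < 1) (hd : 0 ≤ d) (ha : X ≤ a) (hb : X ≤ b * d)
    (ha0 : 0 ≤ a) (hb0 : 0 ≤ b) : X ≤ (a + b) * d ^ σ := by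
  rcases le_total d 1 with h | h
  · rcases hd.eq_or_lt with rfl | hd
    · rw [Real.zero_rpow h0.ne']; simpa using hb
    have : d ≤ d ^ σ := by
      conv_lhs => rw [← Real.rpow_one d]
      exact Real.rpow_le_rpow_of_exponent_ge hd h h1.le
    have h2 : 0 ≤ d ^ σ := by positivity
    nlinarith [mul_le_mul_of_nonneg_left this hb0, mul_nonneg ha0 h2]
  · have : 1 ≤ d ^ σ := Real.one_le_rpow h h0.le
    nlinarith [mul_nonneg hb0 (zero_le_one.trans this), mul_le_mul_of_nonneg_left this ha0]

lemma UU_hol {lam K σ : ℝ} (hl : 0 < lam) (h0 : 0 < σ) (h1 : σ < 1) {g : EE m → ℝ}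
    (hg : Measurable g)
    (hK : ∀ x, |g x| ≤ K) (x x' : EE m) :
    |UU lam g x - UU lam g x'| ≤
      K * (2 * (l1 (gauss m) * mom lam 1) + l1 (fd (gauss m)) * mom lam 0) * ‖x - x'‖ ^ σ := by
  have hK0 : 0 ≤ K := (abs_nonneg _).trans (hK 0)
  have hA : 0 ≤ l1 (gauss m) * mom lam 1 := mul_nonneg (l1_nonneg _) (mom_nonneg _ _)
  have hB : 0 ≤ l1 (fd (gauss m)) * mom lam 0 := mul_nonneg (l1_nonneg _) (mom_nonneg _ _)
  have := interp (X := |UU lam g x - UU lam g x'|) (a := K * (2 * (l1 (gauss m) * mom lam 1)))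
    (b := K * (l1 (fd (gauss m)) * mom lam 0)) (d := ‖x - x'‖) h0 h1 (norm_nonneg _)
    (by
      have t1 := UU_bound hl hK x
      have t2 := UU_bound hl hK x'
      have := abs_sub (UU lam g x) (UU lam g x')
      linarith)
    (by
      rw [← Real.norm_eq_abs]
      exact Convex.norm_image_sub_le_of_norm_hasFDerivWithin_le (𝕜 := ℝ) (s := univ)
        (fun z _ => (UU_hasFDerivAt hl hg hK z).hasFDerivWithinAt)
        (fun z _ => UU_fderiv_bound hl hK z) convex_univ (mem_univ _) (mem_univ _))
    (by positivity) (by positivity)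
  refine this.trans (le_of_eq ?_)
  ring

lemma PP_continuous {lam K : ℝ} (hl : 0 < lam) {g : EE m → ℝ} (hg : Measurable g)
    (hK : ∀ x, |g x| ≤ K) (v : EE m) : Continuous (PP lam g v) := by
  unfold PP TI
  refine Continuous.neg ?_
  refine continuous_of_dominated (bound := fun r => K * l1 (pd v (gauss m)) * om lam (0 + 0) r)
    (fun x => TI_aesm lam 0 0 _ hg x) ?_
    ((om_integrable hl (Or.inr ⟨rfl, by norm_num⟩)).const_mul _) ?_
  · intro x
    refine (ae_restrict_mem measurableSet_Ioi).mono fun r hr => ?_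
    exact om_smul_le hr (Sk_bound0 _ hK r x)
  · refine (ae_restrict_mem measurableSet_Ioi).mono fun r hr => ?_
    have hc : Continuous (Sk (pd v (gauss m)) g r) := continuous_iff_continuousAt.2 fun x =>
      (Sk_hasFDerivAt (pd v (gauss m)) hg hK hr x).continuousAt
    exact hc.const_smul (om lam 0 r)

lemma PP_hasFDerivAt {lam K σ : ℝ} (hl : 0 < lam) (h0 : 0 < σ) (h1 : σ < 1) {g : EE m → ℝ}
    (hg : Dat σ K g) {v : EE m} (hv : v.2 = 0) (x : EE m) :
    HasFDerivAt (PP lam g v) (TI lam 0 (-1) (fd (pd v (gauss m))) g x) x := by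
  have := TI_hasFDerivAt hl (pd v (gauss m)) (a := 0) (s := 0) hg.meas hg.bd x
    (Or.inr ⟨rfl, by norm_num⟩)
    (fun r _ => Sk_bound0 _ hg.bd r x) (τ' := σ) (Or.inr ⟨rfl, by linarith⟩)
    (fun r hr x => Sk_gain_fd (gauss m) hv hg.meas h0.le h1.le hg.bd hg.hy hr x)
  rw [zero_sub] at this
  have h2 := this.neg
  rw [neg_neg] at h2
  exact h2

lemma PP_fderiv_apply {lam K σ : ℝ} (hl : 0 < lam) (h0 : 0 < σ) (h1 : σ < 1) {g : EE m → ℝ}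
    (hg : Dat σ K g) {v : EE m} (hv : v.2 = 0) (x w : EE m) :
    TI lam 0 (-1) (fd (pd v (gauss m))) g x w = RR lam g v w x :=
  TI_fd_apply hl _ hg.meas hg.bd x w (τ := σ) (Or.inr ⟨rfl, by linarith⟩)
      (fun _ hr => Sk_gain_fd (gauss m) hv hg.meas h0.le h1.le hg.bd hg.hy hr x)

lemma RR_comm (lam : ℝ) (g : EE m → ℝ) (v w x : EE m) : RR lam g v w x = RR lam g w v x := by
  rw [RR, RR, pd_comm_gauss]

/-- the bound constant for second derivatives -/
noncomputable def cR (lam σ : ℝ) (v w : EE m) : ℝ :=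
  l1w (pd w (pd v (gauss m))) * mom lam (-1 + σ) + 
  (2 * l1w (pd w (pd v (gauss m))) / σ + l1w (fd (pd w (pd v (gauss m)))) / (1 - σ))

lemma cR_nonneg {lam σ : ℝ} (h0 : 0 < σ) (h1 : σ < 1) (v w : EE m) : 0 ≤ cR lam σ v w := by
  have a1 := l1w_nonneg (pd w (pd v (gauss m)))
  have a2 := l1w_nonneg (fd (pd w (pd v (gauss m))))
  have a3 := mom_nonneg lam (-1 + σ)
  have a4 : 0 < 1 - σ := by linarith
  unfold cR
  positivity

lemma RR_bound {lam K σ : ℝ} (hl : 0 < lam) (h0 : 0 < σ) (h1 : σ < 1) {g : EE m → ℝ}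
    (hg : Dat σ K g) {w : EE m} (hw : w.2 = 0) (v x : EE m) :
    |RR lam g v w x| ≤ K * cR lam σ v w := by
  have hK0 : 0 ≤ K := (abs_nonneg _).trans (hg.bd 0)
  have := TI_bound hl (pd w (pd v (gauss m))) x (s := -1) (τ := σ) (by linarith)
    (fun r hr => Sk_gain _ hw hg.meas h0.le h1.le hg.bd hg.hy hr x)
  rw [Real.norm_eq_abs, mul_assoc] at this
  refine this.trans ?_
  unfold cR
  have a1 := l1w_nonneg (pd w (pd v (gauss m)))
  have a2 := l1w_nonneg (fd (pd w (pd v (gauss m))))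
  have a4 : 0 < 1 - σ := by linarith
  gcongr
  refine le_add_of_nonneg_right ?_
  positivity

lemma RR_hol {lam K σ : ℝ} (hl : 0 < lam) (h0 : 0 < σ) (h1 : σ < 1) {g : EE m → ℝ}
    (hg : Dat σ K g) {w : EE m} (hw : w.2 = 0) (v x x' : EE m) :
    |RR lam g v w x - RR lam g v w x'| ≤ K * cR lam σ v w * ‖x - x'‖ ^ σ := by
  have hK0 : 0 ≤ K := (abs_nonneg _).trans (hg.bd 0)
  have := TI_hol hl h0 h1 (pd w (pd v (gauss m))) hg.meas hg.bd
    (fun r hr x => Sk_gain _ hw hg.meas h0.le h1.le hg.bd hg.hy hr x)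
    (fun r hr x => Sk_gain_fd _ hw hg.meas h0.le h1.le hg.bd hg.hy hr x) x x'
  rw [Real.norm_eq_abs] at this
  refine this.trans ?_
  gcongr
  have a1 := l1w_nonneg (pd w (pd v (gauss m)))
  have a3 := mom_nonneg lam (-1 + σ)
  have e : 2 * (K * l1w (pd w (pd v (gauss m)))) / σ +
    K * l1w (fd (pd w (pd v (gauss m)))) / (1 - σ) = K * (2 * l1w (pd w (pd v (gauss m))) / σ +
      l1w (fd (pd w (pd v (gauss m)))) / (1 - σ)) := by ring
  rw [e, cR]
  refine mul_le_mul_of_nonneg_left ?_ hK0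
  refine le_add_of_nonneg_left ?_
  positivity

end HS

open MeasureTheory Set Filter
open scoped SchwartzMap ContDiff

namespace HS

variable {m : ℕ}

/-- the Laplacian of the Gaussian -/
noncomputable def lapG (m : ℕ) : 𝓢(EE m, ℝ) :=
  ∑ i : Fin m, pd (bh i) (pd (bh i) (gauss m)) + pd bt (pd bt (gauss m))

lemma Sk_add (k k' : 𝓢(EE m, ℝ)) {g : EE m → ℝ} (hg : Measurable g) {K : ℝ}
    (hK : ∀ x, |g x| ≤ K) (r : ℝ) (x : EE m) :
    Sk (k + k') g r x = Sk k g r x + Sk k' g r x := by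
  rw [Sk, Sk, Sk, ← integral_add (Sk_integrable k hg hK r x) (Sk_integrable k' hg hK r x)]
  congr 1
  funext z
  rw [SchwartzMap.add_apply, smul_add]

lemma Sk_sum (k : Fin m → 𝓢(EE m, ℝ)) {g : EE m → ℝ} (hg : Measurable g) {K : ℝ}
    (hK : ∀ x, |g x| ≤ K) (r : ℝ) (x : EE m) :
    Sk (∑ i, k i) g r x = ∑ i, Sk (k i) g r x := by
  simp only [Sk]
  rw [← integral_finsetSum _ (fun i _ => Sk_integrable (k i) hg hK r x)]
  congr 1
  funext z
  rw [SchwartzMap.sum_apply, Finset.smul_sum]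

lemma Sk_neg (k : 𝓢(EE m, ℝ)) (g : EE m → ℝ) (r : ℝ) (x : EE m) :
    Sk (-k) g r x = - Sk k g r x := by
  rw [Sk, Sk, ← integral_neg]
  congr 1
  funext z
  rw [SchwartzMap.neg_apply, smul_neg]

lemma TI_lapG {lam K ε : ℝ} (hl : 0 < lam) {g : EE m → ℝ} (hg : Measurable g)
    (hK : ∀ x, |g x| ≤ K) (hε : 0 < ε) (x : EE m) :
    TI lam ε (-1) (lapG m) g x =
      lam * TI lam ε 1 (gauss m) g x - Real.exp (-(lam / 2) * ε ^ 2) * Sk (gauss m) g ε x := by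
  have hder : ∀ r, 0 < r → HasDerivAt (fun r => Real.exp (-(lam / 2) * r ^ 2) * Sk (gauss m) g r x)
      (om lam (-1) r • Sk (lapG m) g r x - lam * (om lam 1 r • Sk (gauss m) g r x)) r := by
    intro r hr
    have h1 := Sk_hasDerivAt (gauss m) (-lapG m) (by
      intro z
      rw [smul_eq_mul, gauss_identity, SchwartzMap.neg_apply, lapG, SchwartzMap.add_apply,
        SchwartzMap.sum_apply]) hg hK hr x
    have h2 : HasDerivAt (fun r : ℝ => Real.exp (-(lam / 2) * r ^ 2)) _ r :=
      ((hasDerivAt_pow 2 r).const_mul (-(lam / 2))).exp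
    have h3 := h2.mul h1
    refine h3.congr_deriv ?_
    rw [Sk_neg]
    simp only [om, Real.rpow_one, Real.rpow_neg_one, smul_eq_mul]
    push_cast
    ring
  have hi1 : IntegrableOn (fun r => om lam (-1) r • Sk (lapG m) g r x) (Ioi ε) :=
    TI_integrable hl _ hg x (Or.inl hε) (fun r _ => Sk_bound0 _ hK r x)
  have hi2 : IntegrableOn (fun r => om lam 1 r • Sk (gauss m) g r x) (Ioi ε) :=
    TI_integrable hl _ hg x (Or.inl hε) (fun r _ => Sk_bound0 _ hK r x)
  have hlim : Tendsto (fun r => Real.exp (-(lam / 2) * r ^ 2) * Sk (gauss m) g r x) atTop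
      (nhds 0) := by
    have h1 : Tendsto (fun r : ℝ => Real.exp (-(lam / 2) * r ^ 2)) atTop (nhds 0) := by
      refine Real.tendsto_exp_atBot.comp ?_
      refine Tendsto.const_mul_atTop_of_neg (by linarith) ?_
      exact tendsto_pow_atTop (by norm_num)
    refine h1.zero_mul_isBoundedUnder_le ?_
    refine isBoundedUnder_of ⟨K * l1 (gauss m), fun r => ?_⟩
    exact Sk_bound _ hK r x
  have := integral_Ioi_of_hasDerivAt_of_tendsto (hder ε hε).continuousAt.continuousWithinAt
    (fun r hr => hder r (hε.trans hr)) (hi1.sub (hi2.const_mul lam)) hlim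
  have e : ∫ r in Ioi ε, (om lam (-1) r • Sk (lapG m) g r x -
      lam * (om lam 1 r • Sk (gauss m) g r x)) =
      TI lam ε (-1) (lapG m) g x - lam * TI lam ε 1 (gauss m) g x := by
    rw [integral_sub hi1 (hi2.const_mul lam), integral_const_mul]; rfl
  rw [e] at this
  linarith

lemma TI_lapG_split {lam K ε : ℝ} (hl : 0 < lam) {g : EE m → ℝ} (hg : Measurable g)
    (hK : ∀ x, |g x| ≤ K) (hε : 0 < ε) (x : EE m) :
    TI lam ε (-1) (lapG m) g x = ∑ i : Fin m, TI lam ε (-1) (pd (bh i) (pd (bh i) (gauss m))) g x +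
      TI lam ε (-1) (pd bt (pd bt (gauss m))) g x := by
  have hi : ∀ k : 𝓢(EE m, ℝ), IntegrableOn (fun r => om lam (-1) r • Sk k g r x) (Ioi ε) :=
    fun k => TI_integrable hl _ hg x (Or.inl hε) (fun r _ => Sk_bound0 _ hK r x)
  simp only [TI]
  rw [← integral_finsetSum _ (fun i _ => hi _), ← integral_add
    (integrable_finset_sum _ (fun i _ => hi _)) (hi _)]
  congr 1
  funext r
  rw [lapG, Sk_add _ _ hg hK, Sk_sum _ hg hK, smul_add, Finset.smul_sum]

/-- coordinate functionals -/
noncomputable def cH {m : ℕ} (i : Fin m) : EE m →L[ℝ] ℝ :=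
  (EuclideanSpace.proj i).comp (ContinuousLinearMap.fst ℝ _ _)
/-- vertical coordinate functional -/
noncomputable def cT {m : ℕ} : EE m →L[ℝ] ℝ := ContinuousLinearMap.snd ℝ _ _

lemma cH_apply (i : Fin m) (x : EE m) : cH i x = x.1 i := rfl
lemma cT_apply (x : EE m) : cT x = x.2 := rfl

lemma cH_norm (i : Fin m) : ‖(cH i : EE m →L[ℝ] ℝ)‖ ≤ 1 := by
  refine ContinuousLinearMap.opNorm_le_bound _ zero_le_one fun x => ?_
  rw [one_mul, cH_apply]
  exact (PiLp.norm_apply_le x.1 i).trans (norm_fst_le x)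

lemma cT_norm : ‖(cT : EE m →L[ℝ] ℝ)‖ ≤ 1 := by
  refine ContinuousLinearMap.opNorm_le_bound _ zero_le_one fun x => ?_
  rw [one_mul, cT_apply]
  exact norm_snd_le x

lemma vec_expand (x : EE m) : x = ∑ i, x.1 i • bh i + x.2 • bt := by
  refine Prod.ext ?_ ?_
  · simp only [bh, bt, Prod.fst_add, Prod.fst_sum, Prod.smul_fst, smul_zero, add_zero]
    ext j
    simp [Finset.sum_apply, Pi.single_apply]
  · simp [bh, bt, Prod.snd_sum]

lemma clm_expand {F : Type*} [NormedAddCommGroup F] [NormedSpace ℝ F] (L : EE m →L[ℝ] F)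
    (v : EE m) : L v = ∑ i, v.1 i • L (bh i) + v.2 • L bt := by
  conv_lhs => rw [vec_expand v]
  simp

lemma clm_norm {F : Type*} [NormedAddCommGroup F] [NormedSpace ℝ F] (L : EE m →L[ℝ] F) :
    ‖L‖ ≤ ∑ i, ‖L (bh i)‖ + ‖L bt‖ := by
  refine ContinuousLinearMap.opNorm_le_bound _ (by positivity) fun v => ?_
  rw [clm_expand L v, add_mul, Finset.sum_mul]
  refine (norm_add_le _ _).trans (add_le_add ((norm_sum_le _ _).trans
    (Finset.sum_le_sum fun i _ => ?_)) ?_)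
  · rw [norm_smul, mul_comm]
    gcongr
    exact (PiLp.norm_apply_le v.1 i).trans (norm_fst_le v)
  · rw [norm_smul, mul_comm]
    gcongr
    exact norm_snd_le v

lemma bh_snd (i : Fin m) : (bh i : EE m).2 = 0 := rfl

lemma cH_bh (i j : Fin m) : cH i (bh j : EE m) = if i = j then 1 else 0 := by
  simp [cH_apply, bh, Pi.single_apply]
lemma cH_bt (i : Fin m) : cH i (bt : EE m) = 0 := by simp [cH_apply, bt]
lemma cT_bh (i : Fin m) : cT (bh i : EE m) = 0 := rfl
lemma cT_bt : cT (bt : EE m) = 1 := rfl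

/-- second vertical derivative -/
noncomputable def Rtt (lam : ℝ) (g : EE m → ℝ) (x : EE m) : ℝ :=
  lam * UU lam g x - ∑ i : Fin m, RR lam g (bh i) (bh i) x - g x

/-- derivative of `PP bt` -/
noncomputable def LT (lam : ℝ) (g : EE m → ℝ) (x : EE m) : EE m →L[ℝ] ℝ :=
  ∑ i : Fin m, RR lam g bt (bh i) x • cH i + Rtt lam g x • cT

lemma LT_bh (lam : ℝ) (g : EE m → ℝ) (x : EE m) (i : Fin m) :
    LT lam g x (bh i) = RR lam g bt (bh i) x := by
  simp [LT, cH_bh, cT_bh]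

lemma LT_bt (lam : ℝ) (g : EE m → ℝ) (x : EE m) :
    LT lam g x bt = Rtt lam g x := by
  simp [LT, cH_bt, cT_bt]

end HS

open MeasureTheory Set Filter
open scoped SchwartzMap ContDiff

namespace HS

variable {m : ℕ}

lemma trunc_hasFDerivAt {lam K ε : ℝ} (hl : 0 < lam) {g : EE m → ℝ} (hg : Measurable g)
    (hK : ∀ x, |g x| ≤ K) (hε : 0 < ε) (v x : EE m) :
    HasFDerivAt (fun x => -TI lam ε 0 (pd v (gauss m)) g x)
      (TI lam ε (-1) (fd (pd v (gauss m))) g x) x := by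
  have := TI_hasFDerivAt hl (pd v (gauss m)) (a := ε) (s := 0) hg hK x
    (Or.inl hε)
    (fun r _ => Sk_bound0 _ hK r x) (Or.inl hε)
    (fun r hr x => Sk_bound0 _ hK r x)
  rw [zero_sub] at this
  have h2 := this.neg
  rw [neg_neg] at h2
  exact h2

lemma LT_approx {lam K σ A : ℝ} (hl : 0 < lam) (h0 : 0 < σ) (h1 : σ < 1) {g : EE m → ℝ}
    (hg : Dat σ K g) (hA : 0 ≤ A) : ∃ C, 0 ≤ C ∧ ∀ x : EE m,
    (∀ z, |g (x + z) - g x| ≤ A * ‖z‖ ^ σ) → ∀ ε, 0 < ε → ε ≤ 1 →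
    ‖TI lam ε (-1) (fd (pd bt (gauss m))) g x - LT lam g x‖ ≤ C * ε ^ σ := by
  have hK0 : 0 ≤ K := (abs_nonneg _).trans (hg.bd 0)
  let CR : EE m → Fin m → ℝ := fun v i => K * l1w (pd (bh i) (pd v (gauss m))) / σ
  have hCR : ∀ v i, 0 ≤ CR v i := fun v i => by
    have := l1w_nonneg (pd (bh i) (pd v (gauss m))); positivity
  have hRR : ∀ v i x ε, 0 < ε → |TI lam ε (-1) (pd (bh i) (pd v (gauss m))) g x -
      RR lam g v (bh i) x| ≤ CR v i * ε ^ σ := by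
    intro v i x ε hε
    have := TI_trunc hl (pd (bh i) (pd v (gauss m))) hg.meas x (s := -1) (τ := σ) (by linarith)
      (fun r hr => Sk_gain _ (bh_snd i) hg.meas h0.le h1.le hg.bd hg.hy hr x) hε
    have e : -1 + σ + 1 = σ := by ring
    rw [e, Real.norm_eq_abs, abs_sub_comm] at this
    exact this
  let CU : ℝ := K * l1 (gauss m) / 2
  have hCU : 0 ≤ CU := by have := l1_nonneg (gauss m); positivity
  have hU : ∀ x ε, 0 < ε → ε ≤ 1 → |TI lam ε 1 (gauss m) g x - UU lam g x| ≤ CU * ε ^ σ := by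
    intro x ε hε hε1
    have := TI_trunc hl (gauss m) hg.meas x (s := 1) (τ := 0) (by norm_num)
      (fun r hr => Sk_bound0 _ hg.bd r x) hε
    have e : (1 : ℝ) + 0 + 1 = 2 := by norm_num
    rw [e, Real.norm_eq_abs, abs_sub_comm] at this
    refine this.trans ?_
    have h2 : ε ^ (2:ℝ) ≤ ε ^ σ :=
      Real.rpow_le_rpow_of_exponent_ge hε hε1 (by linarith)
    exact mul_le_mul_of_nonneg_left h2 hCU
  let CS : ℝ := A * l1w (gauss m) + (lam / 2) * (K * l1 (gauss m))
  have hCS : 0 ≤ CS := by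
    have := l1_nonneg (gauss m); have := l1w_nonneg (gauss m); positivity
  have hS : ∀ x : EE m, (∀ z, |g (x + z) - g x| ≤ A * ‖z‖ ^ σ) → ∀ ε, 0 < ε → ε ≤ 1 →
      |Real.exp (-(lam / 2) * ε ^ 2) * Sk (gauss m) g ε x - g x| ≤ CS * ε ^ σ := by
    intro x hx ε hε hε1
    have t1 := Sk_approx (gauss m) (gauss_int m) hg.meas h0.le h1.le hg.bd x hA hx hε
    have t2 := Sk_bound (gauss m) hg.bd ε x
    rw [Real.norm_eq_abs] at t2
    have t3 : |Real.exp (-(lam / 2) * ε ^ 2) - 1| ≤ (lam / 2) * ε ^ σ := by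
      have a1 : Real.exp (-(lam / 2) * ε ^ 2) ≤ 1 :=
        Real.exp_le_one_iff.2 (by nlinarith [sq_nonneg ε])
      have a2 := Real.add_one_le_exp (-(lam / 2) * ε ^ 2)
      have a3 : ε ^ 2 ≤ ε ^ σ := by
        rw [← Real.rpow_natCast]
        exact Real.rpow_le_rpow_of_exponent_ge hε hε1 (by push_cast; linarith)
      rw [abs_sub_comm, abs_of_nonneg (by linarith)]
      nlinarith
    have e : Real.exp (-(lam / 2) * ε ^ 2) * Sk (gauss m) g ε x - g x =
      (Real.exp (-(lam / 2) * ε ^ 2) - 1) * Sk (gauss m) g ε x + (Sk (gauss m) g ε x - g x) := by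
      ring
    rw [e]
    refine (abs_add_le _ _).trans ?_
    rw [abs_mul]
    have t4 : |Real.exp (-(lam / 2) * ε ^ 2) - 1| * |Sk (gauss m) g ε x| ≤
      ((lam / 2) * ε ^ σ) * (K * l1 (gauss m)) := by gcongr
    refine (add_le_add t4 t1).trans (le_of_eq ?_)
    simp only [CS]
    ring
  refine ⟨∑ i, CR bt i + (lam * CU + ∑ i, CR (bh i) i + CS), ?_, ?_⟩
  · have : ∀ v, 0 ≤ ∑ i, CR v i := fun v => Finset.sum_nonneg fun i _ => hCR v i
    have : 0 ≤ ∑ i, CR (bh i) i := Finset.sum_nonneg fun i _ => hCR _ i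
    have := this
    have := ‹∀ v, 0 ≤ ∑ i, CR v i› bt
    positivity
  intro x hx ε hε hε1
  refine (clm_norm _).trans ?_
  have hap : ∀ w : EE m, TI lam ε (-1) (fd (pd bt (gauss m))) g x w =
      TI lam ε (-1) (pd w (pd bt (gauss m))) g x := fun w =>
    TI_fd_apply hl _ hg.meas hg.bd x w (Or.inl hε) (fun r _ => Sk_bound0 _ hg.bd r x)
  rw [add_mul, Finset.sum_mul]
  refine add_le_add (Finset.sum_le_sum fun i _ => ?_) ?_
  · rw [sub_apply, hap, LT_bh, Real.norm_eq_abs]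
    exact hRR bt i x ε hε
  · rw [sub_apply, hap, LT_bt, Real.norm_eq_abs]
    have e1 := TI_lapG hl hg.meas hg.bd hε x
    have e2 := TI_lapG_split hl hg.meas hg.bd hε x
    have e3 : TI lam ε (-1) (pd bt (pd bt (gauss m))) g x - Rtt lam g x =
      lam * (TI lam ε 1 (gauss m) g x - UU lam g x) -
      (∑ i : Fin m, (TI lam ε (-1) (pd (bh i) (pd (bh i) (gauss m))) g x -
        RR lam g (bh i) (bh i) x)) -
      (Real.exp (-(lam / 2) * ε ^ 2) * Sk (gauss m) g ε x - g x) := by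
      rw [Rtt, Finset.sum_sub_distrib]; linarith
    rw [e3]
    refine (abs_sub _ _).trans ?_
    refine (add_le_add (abs_sub _ _) (hS x hx ε hε hε1)).trans ?_
    rw [abs_mul, abs_of_pos hl]
    have t1 := hU x ε hε hε1
    have t2 : |∑ i : Fin m, (TI lam ε (-1) (pd (bh i) (pd (bh i) (gauss m))) g x -
        RR lam g (bh i) (bh i) x)| ≤ ∑ i, CR (bh i) i * ε ^ σ :=
      (Finset.abs_sum_le_sum_abs _ _).trans (Finset.sum_le_sum fun i _ => hRR _ i x ε hε)
    rw [← Finset.sum_mul] at t2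
    have t3 := mul_le_mul_of_nonneg_left t1 hl.le
    linarith

lemma PPbt_hasFDerivAt {lam K σ : ℝ} (hl : 0 < lam) (h0 : 0 < σ) (h1 : σ < 1) {g : EE m → ℝ}
    (hg : Dat σ K g)
    (hloc : ∀ t0, 0 < t0 → ∃ A, 0 ≤ A ∧ ∀ x : EE m, t0 < x.2 →
      ∀ z, |g (x + z) - g x| ≤ A * ‖z‖ ^ σ) (x : EE m) (hx : 0 < x.2) :
    HasFDerivAt (PP lam g bt) (LT lam g x) x := by
  obtain ⟨A, hA, hAx⟩ := hloc (x.2 / 2) (by linarith)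
  obtain ⟨C, hC, hap⟩ := LT_approx hl h0 h1 hg hA
  let e : ℕ → ℝ := fun n => 1 / ((n : ℝ) + 1)
  have he0 : ∀ n, 0 < e n := fun n => by positivity
  have he1 : ∀ n, e n ≤ 1 := fun n => by
    simp only [e]
    rw [div_le_one (by positivity)]
    linarith [(Nat.cast_nonneg n : (0:ℝ) ≤ n)]
  have helim : Tendsto e atTop (nhds 0) := tendsto_one_div_add_atTop_nhds_zero_nat
  have hpow : ∀ (C s : ℝ), 0 < s → Tendsto (fun n => C * e n ^ s) atTop (nhds 0) := by
    intro C s hs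
    have := (helim.rpow_const (p := s) (Or.inr hs.le)).const_mul C
    rwa [Real.zero_rpow hs.ne', mul_zero] at this
  refine hasFDerivAt_of_tendstoUniformlyOn (s := {x' : EE m | x.2 / 2 < x'.2})
    (f := fun (n : ℕ) x => -TI lam (e n) 0 (pd bt (gauss m)) g x)
    (f' := fun (n : ℕ) x => TI lam (e n) (-1) (fd (pd bt (gauss m))) g x) (g' := LT lam g)
    (l := atTop) ?_ ?_ ?_ ?_ ?_
  · exact isOpen_lt continuous_const continuous_snd
  · rw [Metric.tendstoUniformlyOn_iff]
    intro δ hδ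
    filter_upwards [(hpow C σ h0).eventually (gt_mem_nhds hδ)] with n hn x' hx'
    rw [dist_comm, dist_eq_norm]
    exact (hap x' (hAx x' hx') (e n) (he0 n) (he1 n)).trans_lt hn
  · intro n x' _
    exact trunc_hasFDerivAt hl hg.meas hg.bd (he0 n) bt x'
  · intro x' _
    unfold PP
    refine Tendsto.neg ?_
    rw [tendsto_iff_norm_sub_tendsto_zero]
    refine squeeze_zero (fun n => norm_nonneg _) (fun n => ?_)
      (hpow (K * l1 (pd bt (gauss m)) / (0 + 0 + 1)) (0 + 0 + 1) (by norm_num))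
    rw [norm_sub_rev]
    exact TI_trunc hl (pd bt (gauss m)) hg.meas x' (s := 0) (τ := 0) (by norm_num)
      (fun r _ => Sk_bound0 _ hg.bd r x') (he0 n)
  · change x.2 / 2 < x.2; linarith

end HS

open MeasureTheory Set Filter
open scoped SchwartzMap ContDiff

namespace HS

variable {m : ℕ}

/-- sign function -/
noncomputable def sg (t : ℝ) : ℝ := if 0 < t then 1 else if t < 0 then -1 else 0

lemma sg_meas : Measurable sg :=
  Measurable.ite measurableSet_Ioi measurable_const
    (Measurable.ite measurableSet_Iio measurable_const measurable_const)

lemma sg_abs (t : ℝ) : |sg t| ≤ 1 := by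
  unfold sg; split_ifs <;> simp

lemma sg_neg (t : ℝ) : sg (-t) = - sg t := by
  unfold sg
  rcases lt_trichotomy t 0 with h | h | h
  · simp [h, not_lt.2 h.le]
  · simp [h]
  · simp [h, not_lt.2 h.le]

lemma sg_pos {t : ℝ} (ht : 0 < t) : sg t = 1 := by simp [sg, ht]

/-- odd extension -/
noncomputable def oe (h : EE m → ℝ) (x : EE m) : ℝ := sg x.2 * h (x.1, |x.2|)

lemma mem_half {x : EE m} : x ∈ halfSpace m ↔ 0 ≤ x.2 := Iff.rfl

lemma oe_of_pos (h : EE m → ℝ) {x : EE m} (hx : 0 < x.2) : oe h x = h x := by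
  rw [oe, sg_pos hx, one_mul, abs_of_pos hx]

lemma oe_bd {h : EE m → ℝ} {K : ℝ} (hb : ∀ x ∈ halfSpace m, |h x| ≤ K) (x : EE m) :
    |oe h x| ≤ K := by
  rw [oe, abs_mul]
  have h1 := hb (x.1, |x.2|) (mem_half.2 (abs_nonneg _))
  exact (mul_le_of_le_one_left (abs_nonneg _) (sg_abs _)).trans h1

lemma HolderLe.contOn {X Y : Type*} [PseudoMetricSpace X] [NormedAddCommGroup Y]
    {σ : ℝ} (h0 : 0 < σ) {Λ : Set X} {h : X → Y} {K : ℝ} (H : HolderLe σ Λ h K) :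
    ContinuousOn h Λ := by
  intro x hx
  rw [ContinuousWithinAt, tendsto_iff_norm_sub_tendsto_zero]
  have h1 : Tendsto (fun y => K * dist y x ^ σ) (nhdsWithin x Λ) (nhds 0) := by
    have h2 : Tendsto (fun y => dist y x) (nhdsWithin x Λ) (nhds 0) := by
      have : Continuous fun y => dist y x := by fun_prop
      have h3 := this.tendsto x
      rw [dist_self] at h3
      exact h3.mono_left nhdsWithin_le_nhds
    have := (h2.rpow_const (p := σ) (Or.inr h0.le)).const_mul K
    rwa [Real.zero_rpow h0.ne', mul_zero] at this
  refine squeeze_zero' (Eventually.of_forall fun y => norm_nonneg _) ?_ h1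
  filter_upwards [self_mem_nhdsWithin] with y hy
  exact H.2 y hy x hx

lemma oe_dat {h : EE m → ℝ} {K σ : ℝ} (h0 : 0 < σ) (H : HolderLe σ (halfSpace m) h K) :
    Dat σ K (oe h) := by
  have hc := HolderLe.contOn h0 H
  refine ⟨?_, oe_bd H.1, ?_⟩
  · have h1 : Continuous fun x : EE m => h (x.1, |x.2|) := by
      refine hc.comp_continuous (by fun_prop) fun x => mem_half.2 (abs_nonneg _)
    exact (sg_meas.comp measurable_snd).mul h1.measurable
  · intro y y' t
    simp only [oe]
    rw [← mul_sub, abs_mul]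
    have h1 := H.2 (y, |t|) (mem_half.2 (abs_nonneg _)) (y', |t|) (mem_half.2 (abs_nonneg _))
    have h2 : dist (y, |t|) (y', |t|) = ‖y - y'‖ := by
      rw [Prod.dist_eq]; simp [dist_eq_norm]
    rw [h2, Real.norm_eq_abs] at h1
    exact (mul_le_of_le_one_left (abs_nonneg _) (sg_abs _)).trans h1

lemma oe_loc {h : EE m → ℝ} {K σ : ℝ} (h0 : 0 < σ) (H : HolderLe σ (halfSpace m) h K)
    (t0 : ℝ) (ht0 : 0 < t0) : ∃ A, 0 ≤ A ∧ ∀ x : EE m, t0 < x.2 →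
      ∀ z, |oe h (x + z) - oe h x| ≤ A * ‖z‖ ^ σ := by
  have hK0 : 0 ≤ K := (norm_nonneg _).trans (H.1 0 (by simp [halfSpace]))
  refine ⟨K + 2 * K / t0 ^ σ, by positivity, fun x hx z => ?_⟩
  have hx0 : 0 < x.2 := ht0.trans hx
  rcases lt_or_ge 0 (x + z).2 with hz | hz
  · rw [oe_of_pos h hz, oe_of_pos h hx0]
    have := H.2 (x + z) hz.le x hx0.le
    rw [dist_eq_norm, add_sub_cancel_left, Real.norm_eq_abs] at this
    refine this.trans ?_
    gcongr
    have : 0 ≤ 2 * K / t0 ^ σ := by positivity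
    linarith
  · have h1 : t0 ≤ ‖z‖ := by
      have := norm_snd_le z
      rw [Real.norm_eq_abs] at this
      have h3 := neg_abs_le z.2
      rw [Prod.snd_add] at hz
      linarith
    have h2 : t0 ^ σ ≤ ‖z‖ ^ σ := by gcongr
    have h3 := oe_bd H.1 (x + z)
    have h4 := oe_bd H.1 x
    have h5 : 2 * K ≤ 2 * K / t0 ^ σ * ‖z‖ ^ σ := by
      rw [div_mul_eq_mul_div, le_div_iff₀ (by positivity)]
      gcongr
    have h6 : 0 ≤ K * ‖z‖ ^ σ := by positivity
    have := abs_sub (oe h (x + z)) (oe h x)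
    rw [add_mul]
    linarith

lemma UU_zero (lam : ℝ) (h : EE m → ℝ) (y : EuclideanSpace ℝ (Fin m)) :
    UU lam (oe h) (y, 0) = 0 := by
  have key : ∀ r, Sk (gauss m) (oe h) r (y, 0) = 0 := by
    intro r
    let e : EE m ≃ᵐ EE m := MeasurableEquiv.prodCongr (MeasurableEquiv.refl _)
      (MeasurableEquiv.neg ℝ)
    have he : MeasurePreserving e volume volume := by
      have := (MeasurePreserving.id (volume : Measure (EuclideanSpace ℝ (Fin m)))).prod
        (Measure.measurePreserving_neg (volume : Measure ℝ))
      exact this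
    have h1 := he.integral_comp e.measurableEmbedding
      (fun z => oe h ((y, 0) + r • z) • gauss m z)
    have h2 : ∀ z : EE m, oe h ((y, 0) + r • e z) • gauss m (e z) =
        -(oe h ((y, 0) + r • z) • gauss m z) := by
      intro z
      have e1 : e z = (z.1, -z.2) := rfl
      rw [e1, gauss_even]
      simp [oe, sg_neg]
    simp_rw [h2] at h1
    rw [integral_neg] at h1
    rw [Sk]
    linarith
  simp [UU, TI, key]

end HS

open MeasureTheory Set Filter
open scoped SchwartzMap ContDiff

namespace HS

variable {m : ℕ}

lemma hl_add {X Y : Type*} [PseudoMetricSpace X] [NormedAddCommGroup Y]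
    {σ : ℝ} {Λ : Set X} {f g : X → Y} {A B : ℝ} (hf : HolderLe σ Λ f A) (hg : HolderLe σ Λ g B) :
    HolderLe σ Λ (fun x => f x + g x) (A + B) := by
  refine ⟨fun x hx => (norm_add_le _ _).trans (add_le_add (hf.1 x hx) (hg.1 x hx)),
    fun x hx y hy => ?_⟩
  rw [add_sub_add_comm, add_mul]
  exact (norm_add_le _ _).trans (add_le_add (hf.2 x hx y hy) (hg.2 x hx y hy))

lemma hl_neg {X Y : Type*} [PseudoMetricSpace X] [NormedAddCommGroup Y]
    {σ : ℝ} {Λ : Set X} {f : X → Y} {A : ℝ} (hf : HolderLe σ Λ f A) :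
    HolderLe σ Λ (fun x => - f x) A := by
  refine ⟨fun x hx => by rw [norm_neg]; exact hf.1 x hx, fun x hx y hy => ?_⟩
  rw [neg_sub_neg, norm_sub_rev]
  exact hf.2 x hx y hy

lemma hl_sub {X Y : Type*} [PseudoMetricSpace X] [NormedAddCommGroup Y]
    {σ : ℝ} {Λ : Set X} {f g : X → Y} {A B : ℝ} (hf : HolderLe σ Λ f A) (hg : HolderLe σ Λ g B) :
    HolderLe σ Λ (fun x => f x - g x) (A + B) := by
  simpa only [sub_eq_add_neg] using hl_add hf (hl_neg hg)

lemma hl_sum {X Y ι : Type*} [PseudoMetricSpace X] [NormedAddCommGroup Y]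
    {σ : ℝ} {Λ : Set X} (s : Finset ι) {f : ι → X → Y} {A : ι → ℝ}
    (hf : ∀ i, HolderLe σ Λ (f i) (A i)) :
    HolderLe σ Λ (fun x => ∑ i ∈ s, f i x) (∑ i ∈ s, A i) := by
  refine ⟨fun x hx => (norm_sum_le _ _).trans (Finset.sum_le_sum fun i _ => (hf i).1 x hx),
    fun x hx y hy => ?_⟩
  rw [← Finset.sum_sub_distrib, Finset.sum_mul]
  exact (norm_sum_le _ _).trans (Finset.sum_le_sum fun i _ => (hf i).2 x hx y hy)

lemma hl_const_mul {X : Type*} [PseudoMetricSpace X]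
    {σ c : ℝ} (hc : 0 ≤ c) {Λ : Set X} {f : X → ℝ} {A : ℝ} (hf : HolderLe σ Λ f A) :
    HolderLe σ Λ (fun x => c * f x) (c * A) := by
  refine ⟨fun x hx => ?_, fun x hx y hy => ?_⟩
  · rw [norm_mul, Real.norm_of_nonneg hc]
    exact mul_le_mul_of_nonneg_left (hf.1 x hx) hc
  · rw [← mul_sub, norm_mul, Real.norm_of_nonneg hc, mul_assoc]
    exact mul_le_mul_of_nonneg_left (hf.2 x hx y hy) hc

lemma hl_clm {X F : Type*} [PseudoMetricSpace X] [NormedAddCommGroup F] [NormedSpace ℝ F]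
    {σ : ℝ} {Λ : Set X} {L : X → EE m →L[ℝ] F} {A : Fin m → ℝ} {B : ℝ}
    (hA : ∀ i, HolderLe σ Λ (fun x => L x (bh i)) (A i)) (hB : HolderLe σ Λ (fun x => L x bt) B) :
    HolderLe σ Λ L (∑ i, A i + B) := by
  refine ⟨fun x hx => (clm_norm _).trans (add_le_add
    (Finset.sum_le_sum fun i _ => (hA i).1 x hx) (hB.1 x hx)), fun x hx y hy => ?_⟩
  refine (clm_norm _).trans ?_
  rw [add_mul, Finset.sum_mul]
  exact add_le_add (Finset.sum_le_sum fun i _ => (hA i).2 x hx y hy) (hB.2 x hx y hy)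

lemma hl_congr {X Y : Type*} [PseudoMetricSpace X] [NormedAddCommGroup Y]
    {σ : ℝ} {Λ : Set X} {f g : X → Y} {A : ℝ} (hf : HolderLe σ Λ f A)
    (h : ∀ x ∈ Λ, g x = f x) : HolderLe σ Λ g A :=
  ⟨fun x hx => by rw [h x hx]; exact hf.1 x hx,
    fun x hx y hy => by rw [h x hx, h y hy]; exact hf.2 x hx y hy⟩

lemma hl_mono {X Y : Type*} [PseudoMetricSpace X] [NormedAddCommGroup Y]
    {σ : ℝ} {Λ : Set X} {f : X → Y} {A B : ℝ} (hf : HolderLe σ Λ f A) (hAB : A ≤ B) :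
    HolderLe σ Λ f B :=
  ⟨fun x hx => (hf.1 x hx).trans hAB, fun x hx y hy => (hf.2 x hx y hy).trans
    (mul_le_mul_of_nonneg_right hAB (by positivity))⟩

lemma half_convex : Convex ℝ (halfSpace m) := by
  have : halfSpace m = (ContinuousLinearMap.snd ℝ (EuclideanSpace ℝ (Fin m)) ℝ) ⁻¹' (Ici 0) := rfl
  rw [this]
  exact (convex_Ici 0).is_linear_preimage (ContinuousLinearMap.snd ℝ _ ℝ).isLinear

/-- the open half space -/
def oh (m : ℕ) : Set (EE m) := {x | 0 < x.2}

lemma oh_open : IsOpen (oh m) := isOpen_lt continuous_const continuous_snd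

lemma oh_convex : Convex ℝ (oh m) := by
  have : oh m = (ContinuousLinearMap.snd ℝ (EuclideanSpace ℝ (Fin m)) ℝ) ⁻¹' (Ioi 0) := rfl
  rw [this]
  exact (convex_Ioi 0).is_linear_preimage (ContinuousLinearMap.snd ℝ _ ℝ).isLinear

lemma oh_sub : oh m ⊆ halfSpace m := fun _ hx => mem_half.2 (le_of_lt hx)

lemma half_closed : IsClosed (halfSpace m) := isClosed_le continuous_const continuous_snd

lemma closure_oh : closure (oh m) = halfSpace m := by
  have h1 : oh m = univ ×ˢ (Ioi (0:ℝ)) := by ext x; simp [oh]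
  have h2 : halfSpace m = univ ×ˢ (Ici (0:ℝ)) := by ext x; simp [halfSpace]
  rw [h1, h2, closure_prod_eq, closure_univ, closure_Ioi]

lemma half_unique : UniqueDiffOn ℝ (halfSpace m) := by
  refine uniqueDiffOn_convex half_convex ⟨bt, ?_⟩
  exact interior_maximal oh_sub oh_open (by simp [oh, bt])

/-- derivative of the potential -/
noncomputable def DD (lam : ℝ) (g : EE m → ℝ) (x : EE m) : EE m →L[ℝ] ℝ :=
  ∑ i : Fin m, PP lam g (bh i) x • cH i + PP lam g bt x • cT

/-- `LT` corrected on the boundary -/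
noncomputable def LTh (lam : ℝ) (h : EE m → ℝ) (x : EE m) : EE m →L[ℝ] ℝ :=
  LT lam (oe h) x + (oe h x - h x) • cT

/-- second derivative of the potential -/
noncomputable def HH (lam : ℝ) (h : EE m → ℝ) (x : EE m) : EE m →L[ℝ] (EE m →L[ℝ] ℝ) :=
  ∑ i : Fin m, (TI lam 0 (-1) (fd (pd (bh i) (gauss m))) (oe h) x).smulRight (cH i) +
    (LTh lam h x).smulRight cT

lemma LTh_bh (lam : ℝ) (h : EE m → ℝ) (x : EE m) (i : Fin m) :
    LTh lam h x (bh i) = RR lam (oe h) bt (bh i) x := by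
  simp [LTh, LT_bh, cT_bh]

lemma LTh_bt (lam : ℝ) (h : EE m → ℝ) (x : EE m) :
    LTh lam h x bt =
      lam * UU lam (oe h) x - ∑ i : Fin m, RR lam (oe h) (bh i) (bh i) x - h x := by
  simp [LTh, LT_bt, cT_bt, Rtt]

lemma HH_bh (lam : ℝ) (h : EE m → ℝ) (x v : EE m) (i : Fin m) :
    HH lam h x v (bh i) = TI lam 0 (-1) (fd (pd (bh i) (gauss m))) (oe h) x v := by
  simp [HH, cH_bh, cT_bh]

lemma HH_bt (lam : ℝ) (h : EE m → ℝ) (x v : EE m) :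
    HH lam h x v bt = LTh lam h x v := by
  simp [HH, cH_bt, cT_bt]

lemma UU_DD {lam K : ℝ} (hl : 0 < lam) {g : EE m → ℝ} (hg : Measurable g)
    (hK : ∀ x, |g x| ≤ K) (x : EE m) : HasFDerivAt (UU lam g) (DD lam g x) x := by
  have h := UU_hasFDerivAt hl hg hK x
  refine h.congr_fderiv ?_
  rw [← h.fderiv]
  refine ContinuousLinearMap.ext fun v => ?_
  rw [clm_expand]
  simp_rw [UU_fderiv_apply hl hg hK]
  simp [DD, cH_apply, cT_apply, mul_comm]

/-- constants -/
noncomputable def cU (m : ℕ) (lam : ℝ) : ℝ :=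
  2 * (l1 (gauss m) * mom lam 1) + l1 (fd (gauss m)) * mom lam 0

lemma cU_nonneg (m : ℕ) (lam : ℝ) : 0 ≤ cU m lam := by
  have a1 := l1_nonneg (gauss m)
  have a2 := l1_nonneg (fd (gauss m))
  have a3 := mom_nonneg lam 1
  have a4 := mom_nonneg lam 0
  unfold cU; positivity

lemma UU_hl {lam K σ : ℝ} (hl : 0 < lam) (h0 : 0 < σ) (h1 : σ < 1) {g : EE m → ℝ}
    (hg : Measurable g) (hK : ∀ x, |g x| ≤ K) :
    HolderLe σ (halfSpace m) (UU lam g) (K * cU m lam) := by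
  have hK0 : 0 ≤ K := (abs_nonneg _).trans (hK 0)
  refine ⟨fun x _ => ?_, fun x _ y _ => ?_⟩
  · refine (UU_bound hl hK x).trans ?_
    have a1 := l1_nonneg (gauss m)
    have a2 := l1_nonneg (fd (gauss m))
    have a3 := mom_nonneg lam 1
    have a4 := mom_nonneg lam 0
    have a5 := mul_nonneg a1 a3
    have a6 := mul_nonneg a2 a4
    refine mul_le_mul_of_nonneg_left ?_ hK0
    unfold cU; linarith
  · rw [dist_eq_norm, Real.norm_eq_abs]
    exact UU_hol hl h0 h1 hg hK x y

lemma RR_hl {lam K σ : ℝ} (hl : 0 < lam) (h0 : 0 < σ) (h1 : σ < 1) {g : EE m → ℝ}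
    (hg : Dat σ K g) {w : EE m} (hw : w.2 = 0) (v : EE m) :
    HolderLe σ (halfSpace m) (RR lam g v w) (K * cR lam σ v w) := by
  refine ⟨fun x _ => RR_bound hl h0 h1 hg hw v x, fun x _ y _ => ?_⟩
  rw [dist_eq_norm]
  exact RR_hol hl h0 h1 hg hw v x y

lemma LTh_hl {lam K σ : ℝ} (hl : 0 < lam) (h0 : 0 < σ) (h1 : σ < 1) {h : EE m → ℝ}
    (H : HolderLe σ (halfSpace m) h K) :
    HolderLe σ (halfSpace m) (fun x => LTh lam h x bt)
      (lam * (K * cU m lam) + ∑ i : Fin m, K * cR lam σ (bh i : EE m) (bh i) + K) := by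
  have hd := oe_dat h0 H
  simp_rw [LTh_bt]
  exact hl_sub (hl_sub (hl_const_mul hl.le (UU_hl hl h0 h1 hd.meas hd.bd))
    (hl_sum _ fun i => RR_hl hl h0 h1 hd (bh_snd i) _)) H

lemma LTh_hl2 {lam K σ : ℝ} (hl : 0 < lam) (h0 : 0 < σ) (h1 : σ < 1) {h : EE m → ℝ}
    (H : HolderLe σ (halfSpace m) h K) :
    HolderLe σ (halfSpace m) (LTh lam h)
      (∑ i : Fin m, K * cR lam σ (bt : EE m) (bh i) +
      (lam * (K * cU m lam) + ∑ i : Fin m, K * cR lam σ (bh i : EE m) (bh i) + K)) := by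
  have hd := oe_dat h0 H
  refine hl_clm (fun i => ?_) (LTh_hl hl h0 h1 H)
  simp_rw [LTh_bh]
  exact RR_hl hl h0 h1 hd (bh_snd i) _

/-- constant for second derivatives -/
noncomputable def cHH (m : ℕ) (lam σ : ℝ) : ℝ :=
  ∑ i : Fin m, (∑ j : Fin m, cR lam σ (bh j : EE m) (bh i) + cR lam σ (bt : EE m) (bh i)) +
  (∑ j : Fin m, cR lam σ (bt : EE m) (bh j) +
   (lam * cU m lam + ∑ i : Fin m, cR lam σ (bh i : EE m) (bh i) + 1))

lemma HH_hl {lam K σ : ℝ} (hl : 0 < lam) (h0 : 0 < σ) (h1 : σ < 1) {h : EE m → ℝ}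
    (H : HolderLe σ (halfSpace m) h K) :
    HolderLe σ (halfSpace m) (HH lam h) (K * cHH m lam σ) := by
  have hd := oe_dat h0 H
  have key : HolderLe σ (halfSpace m) (HH lam h)
    (∑ i : Fin m, (∑ j : Fin m, K * cR lam σ (bh j : EE m) (bh i) + K * cR lam σ (bt : EE m) (bh i)) +
    (∑ j : Fin m, K * cR lam σ (bt : EE m) (bh j) +
     (lam * (K * cU m lam) + ∑ i : Fin m, K * cR lam σ (bh i : EE m) (bh i) + K))) := by
    refine hl_clm (fun i => hl_clm (fun j => ?_) ?_) (hl_clm (fun j => ?_) ?_)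
    · simp_rw [HH_bh, PP_fderiv_apply hl h0 h1 hd (bh_snd j)]
      exact RR_hl hl h0 h1 hd (bh_snd i) _
    · simp_rw [HH_bt, LTh_bh]
      exact RR_hl hl h0 h1 hd (bh_snd i) _
    · simp_rw [HH_bh, PP_fderiv_apply hl h0 h1 hd (bh_snd j), RR_comm lam (oe h) (bh j) bt]
      exact RR_hl hl h0 h1 hd (bh_snd j) _
    · simp_rw [HH_bt]
      exact LTh_hl hl h0 h1 H
  refine hl_mono key (le_of_eq ?_)
  rw [cHH]
  simp only [mul_add, Finset.mul_sum, Finset.sum_add_distrib]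
  ring

lemma PPbt_within {lam K σ : ℝ} (hl : 0 < lam) (h0 : 0 < σ) (h1 : σ < 1) {h : EE m → ℝ}
    (H : HolderLe σ (halfSpace m) h K) {x : EE m} (hx : x ∈ halfSpace m) :
    HasFDerivWithinAt (PP lam (oe h) bt) (LTh lam h x) (halfSpace m) x := by
  have hd := oe_dat h0 H
  have hder : ∀ x ∈ oh m, HasFDerivAt (PP lam (oe h) bt) (LTh lam h x) x := by
    intro x hx
    have := PPbt_hasFDerivAt hl h0 h1 hd (oe_loc h0 H) x hx
    refine this.congr_fderiv ?_
    rw [LTh, oe_of_pos h hx, sub_self, zero_smul, add_zero]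
  rw [← closure_oh]
  refine hasFDerivWithinAt_closure_of_tendsto_fderiv
    (fun x hx => (hder x hx).differentiableAt.differentiableWithinAt) oh_convex oh_open
    (fun y _ => (PP_continuous hl hd.meas hd.bd bt).continuousWithinAt) ?_
  have hc := (HolderLe.contOn h0 (LTh_hl2 (lam := lam) hl h0 h1 H) x hx).mono oh_sub
  refine Tendsto.congr' ?_ hc
  filter_upwards [self_mem_nhdsWithin] with y hy
  exact (hder y hy).fderiv.symm

lemma DD_within {lam K σ : ℝ} (hl : 0 < lam) (h0 : 0 < σ) (h1 : σ < 1) {h : EE m → ℝ}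
    (H : HolderLe σ (halfSpace m) h K) {x : EE m} (hx : x ∈ halfSpace m) :
    HasFDerivWithinAt (DD lam (oe h)) (HH lam h x) (halfSpace m) x := by
  have hd := oe_dat h0 H
  unfold DD HH
  refine HasFDerivWithinAt.add (HasFDerivWithinAt.fun_sum fun i _ => ?_) ?_
  · exact (PP_hasFDerivAt hl h0 h1 hd (bh_snd i) x).hasFDerivWithinAt.smul_const (cH i)
  · exact (PPbt_within hl h0 h1 H hx).smul_const cT

lemma UU_contDiffOn {lam K σ : ℝ} (hl : 0 < lam) (h0 : 0 < σ) (h1 : σ < 1) {h : EE m → ℝ}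
    (H : HolderLe σ (halfSpace m) h K) : ContDiffOn ℝ 2 (UU lam (oe h)) (halfSpace m) := by
  have hd := oe_dat h0 H
  have e2 : (2 : WithTop ℕ∞) = 1 + 1 := by norm_num
  have e1 : (1 : WithTop ℕ∞) = 0 + 1 := by norm_num
  rw [e2, contDiffOn_succ_iff_hasFDerivWithinAt_of_uniqueDiffOn half_unique]
  refine ⟨fun h => absurd h (by decide), DD lam (oe h), ?_,
    fun x _ => (UU_DD hl hd.meas hd.bd x).hasFDerivWithinAt⟩
  rw [e1, contDiffOn_succ_iff_hasFDerivWithinAt_of_uniqueDiffOn half_unique]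
  refine ⟨fun h => absurd h (by decide), HH lam h, ?_, fun x hx => DD_within hl h0 h1 H hx⟩
  exact contDiffOn_zero.2 (HolderLe.contOn h0 (HH_hl hl h0 h1 H))

lemma UU_iter {lam K σ : ℝ} (hl : 0 < lam) (h0 : 0 < σ) (h1 : σ < 1) {h : EE m → ℝ}
    (H : HolderLe σ (halfSpace m) h K) :
    HolderLe σ (halfSpace m) (iteratedFDerivWithin ℝ 2 (UU lam (oe h)) (halfSpace m))
      (K * cHH m lam σ) := by
  have hd := oe_dat h0 H
  have hap : ∀ x ∈ halfSpace m, ∀ v : Fin 2 → EE m,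
      iteratedFDerivWithin ℝ 2 (UU lam (oe h)) (halfSpace m) x v = HH lam h x (v 0) (v 1) := by
    intro x hx v
    rw [iteratedFDerivWithin_two_apply _ half_unique hx]
    have e : ∀ z ∈ halfSpace m, fderivWithin ℝ (UU lam (oe h)) (halfSpace m) z = DD lam (oe h) z :=
      fun z hz => (UU_DD hl hd.meas hd.bd z).hasFDerivWithinAt.fderivWithin (half_unique z hz)
    rw [fderivWithin_congr e (e x hx), (DD_within hl h0 h1 H hx).fderivWithin (half_unique x hx)]
  have hb : ∀ (L : EE m →L[ℝ] (EE m →L[ℝ] ℝ)) (v : Fin 2 → EE m),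
      ‖L (v 0) (v 1)‖ ≤ ‖L‖ * ∏ i, ‖v i‖ := by
    intro L v
    rw [Fin.prod_univ_two, ← mul_assoc]
    exact L.le_opNorm₂ _ _
  have HHl := HH_hl hl h0 h1 H
  refine ⟨fun x hx => le_trans ?_ (HHl.1 x hx), fun x hx y hy => le_trans ?_ (HHl.2 x hx y hy)⟩
  · refine ContinuousMultilinearMap.opNorm_le_bound (norm_nonneg (HH lam h x)) fun v => ?_
    rw [hap x hx]
    exact hb _ v
  · refine ContinuousMultilinearMap.opNorm_le_bound (norm_nonneg (HH lam h x - HH lam h y)) fun v => ?_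
    rw [sub_apply, hap x hx, hap y hy]
    exact hb (HH lam h x - HH lam h y) v

lemma UU_lap {lam K σ : ℝ} (hl : 0 < lam) (h0 : 0 < σ) (h1 : σ < 1) {h : EE m → ℝ}
    (H : HolderLe σ (halfSpace m) h K) {x : EE m} (hx : 0 < x.2) :
    lam * UU lam (oe h) x - lapP (UU lam (oe h)) x = h x := by
  have hd := oe_dat h0 H
  have e : ∀ v, (fun y => fderiv ℝ (UU lam (oe h)) y v) = PP lam (oe h) v := fun v => by
    funext y; exact UU_fderiv_apply hl hd.meas hd.bd y v
  have h2 : ∀ i : Fin m, fderiv ℝ (PP lam (oe h) (bh i)) x (bh i) =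
      RR lam (oe h) (bh i) (bh i) x := fun i => by
    rw [(PP_hasFDerivAt hl h0 h1 hd (bh_snd i) x).fderiv,
      PP_fderiv_apply hl h0 h1 hd (bh_snd i)]
  have h3 : fderiv ℝ (PP lam (oe h) bt) x bt = Rtt lam (oe h) x := by
    rw [(PPbt_hasFDerivAt hl h0 h1 hd (oe_loc h0 H) x hx).fderiv, LT_bt]
  have h4 : lapP (UU lam (oe h)) x = ∑ i : Fin m, RR lam (oe h) (bh i) (bh i) x +
      Rtt lam (oe h) x := by
    unfold lapP
    have a1 : ∀ i : Fin m, fderiv ℝ (fun y => fderiv ℝ (UU lam (oe h)) y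
      (EuclideanSpace.single i 1, 0)) x (EuclideanSpace.single i 1, 0) =
      RR lam (oe h) (bh i) (bh i) x := fun i => by
      rw [← h2 i, ← e (bh i)]; rfl
    have a2 : fderiv ℝ (fun y => fderiv ℝ (UU lam (oe h)) y (0, 1)) x (0, 1) =
      Rtt lam (oe h) x := by
      rw [← h3, ← e bt]; rfl
    rw [a2]
    simp_rw [a1]
  rw [h4, Rtt, oe_of_pos h hx]
  ring

/-- Solvability of the constant coefficient problem. -/
lemma lemmaS (m : ℕ) {lam σ : ℝ} (hl : 0 < lam) (h0 : 0 < σ) (h1 : σ < 1) :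
    ∃ C, 0 < C ∧ ∃ G : (EE m → ℝ) → (EE m → ℝ), ∀ (h : EE m → ℝ) (K M : ℝ),
      HolderLe σ (halfSpace m) h K → (∀ x ∈ halfSpace m, |h x| ≤ M) →
        ContDiffOn ℝ 2 (G h) (halfSpace m) ∧
        (∀ x : EE m, 0 < x.2 → lam * G h x - lapP (G h) x = h x) ∧
        (∀ y, G h (y, 0) = 0) ∧
        HolderLe σ (halfSpace m) (G h) (C * M) ∧
        HolderLe σ (halfSpace m) (iteratedFDerivWithin ℝ 2 (G h) (halfSpace m)) (C * K) := by
  refine ⟨cU m lam + |cHH m lam σ| + 1, by have := cU_nonneg m lam; positivity,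
    fun h => UU lam (oe h), ?_⟩
  intro h K M H hM
  have hd := oe_dat h0 H
  have hz : (0 : EE m) ∈ halfSpace m := by simp [halfSpace]
  have hK0 : 0 ≤ K := (norm_nonneg _).trans (H.1 0 hz)
  have hM0 : 0 ≤ M := (abs_nonneg _).trans (hM 0 hz)
  have hU := cU_nonneg m lam
  refine ⟨UU_contDiffOn hl h0 h1 H, fun x hx => UU_lap hl h0 h1 H hx,
    fun y => UU_zero lam h y, ?_, ?_⟩
  · refine hl_mono (UU_hl hl h0 h1 hd.meas (oe_bd hM)) ?_
    rw [mul_comm]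
    gcongr
    linarith [abs_nonneg (cHH m lam σ)]
  · refine hl_mono (UU_iter hl h0 h1 H) ?_
    rw [mul_comm]
    gcongr
    linarith [le_abs_self (cHH m lam σ)]

end HS

open MeasureTheory Set Filter
open scoped SchwartzMap ContDiff

namespace HS

variable {m : ℕ}

/-- second derivative test -/
lemma sd_test {F F1 : ℝ → ℝ} {c : ℝ} (h1 : ∀ᶠ s in nhds 0, HasDerivAt F (F1 s) s)
    (h2 : HasDerivAt F1 c 0) (hm : IsLocalMin F 0) : 0 ≤ c := by
  by_contra! hc
  have e1 : deriv F =ᶠ[nhds 0] F1 := h1.mono fun s hs => hs.deriv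
  have e2 : deriv (deriv F) 0 = c := by rw [e1.deriv_eq, h2.deriv]
  have hM : IsLocalMax F 0 :=
    isLocalMax_of_deriv_deriv_neg (by rw [e2]; exact hc) hm.deriv_eq_zero
      h1.self_of_nhds.continuousAt
  have e3 : F =ᶠ[nhds 0] fun _ => F 0 := by
    filter_upwards [hm, hM] with s a b using le_antisymm b a
  have e4 : deriv F =ᶠ[nhds 0] fun _ => (0:ℝ) := by
    have := e3.deriv
    simpa using this
  have e5 : deriv (deriv F) 0 = 0 := by rw [e4.deriv_eq]; simp
  linarith

lemma cd_at {u : EE m → ℝ} (hu : ContDiffOn ℝ 2 u (halfSpace m)) {x : EE m} (hx : 0 < x.2) :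
    ContDiffAt ℝ 2 u x :=
  hu.contDiffAt (mem_of_superset (oh_open.mem_nhds hx) oh_sub)

lemma fd_diff {u : EE m → ℝ} (hu : ContDiffOn ℝ 2 u (halfSpace m)) {x : EE m} (hx : 0 < x.2)
    (v : EE m) : DifferentiableAt ℝ (fun y => fderiv ℝ u y v) x :=
  (((cd_at hu hx).fderiv_right (m := 1) (by norm_num)).differentiableAt (by norm_num)).clm_apply
    (differentiableAt_const v)

lemma line_deriv {u : EE m → ℝ} (hu : ContDiffOn ℝ 2 u (halfSpace m)) {x : EE m} (hx : 0 < x.2)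
    (v : EE m) :
    (∀ᶠ s : ℝ in nhds 0, HasDerivAt (fun s : ℝ => u (x + s • v)) (fderiv ℝ u (x + s • v) v) s) ∧
    HasDerivAt (fun s : ℝ => fderiv ℝ u (x + s • v) v)
      (fderiv ℝ (fun y => fderiv ℝ u y v) x v) 0 := by
  have hl : ∀ s : ℝ, HasDerivAt (fun s : ℝ => x + s • v) v s := fun s => by
    simpa using ((hasDerivAt_id s).smul_const v).const_add x
  constructor
  · have : ∀ᶠ s : ℝ in nhds 0, x + s • v ∈ oh m := by
      have hc : ContinuousAt (fun s : ℝ => x + s • v) 0 := (hl 0).continuousAt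
      exact hc (oh_open.mem_nhds (by simpa [oh] using hx))
    filter_upwards [this] with s hs
    have := ((cd_at hu hs).differentiableAt (by norm_num)).hasFDerivAt
    exact this.comp_hasDerivAt s (hl s)
  · have h := (fd_diff hu hx v).hasFDerivAt
    have h' : HasFDerivAt (fun y => fderiv ℝ u y v) (fderiv ℝ (fun y => fderiv ℝ u y v) x)
      (x + (0:ℝ) • v) := by simpa using h
    exact h'.comp_hasDerivAt 0 (hl 0)

lemma lapP_eq (u : EE m → ℝ) (x : EE m) : lapP u x =
    ∑ i : Fin m, fderiv ℝ (fun y => fderiv ℝ u y (bh i)) x (bh i) +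
      fderiv ℝ (fun y => fderiv ℝ u y bt) x bt := rfl

lemma QQ_bh (x : EE m) (i : Fin m) (s : ℝ) : QQ (x + s • bh i) = QQ x + 2 * x.1 i * s + s ^ 2 := by
  have : ∀ j, ((x + s • bh i : EE m).1 j) = x.1 j + s * (if j = i then 1 else 0) := fun j => by
    simp [bh]
  rw [QQ_eq_sum, QQ_eq_sum]
  simp_rw [this]
  have h2 : (x + s • bh i : EE m).2 = x.2 := by simp [bh]
  rw [h2]
  have : ∀ j, (x.1 j + s * (if j = i then (1:ℝ) else 0)) ^ 2 =
    x.1 j ^ 2 + (if j = i then 2 * x.1 j * s + s ^ 2 else 0) := fun j => by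
    split_ifs <;> ring
  simp_rw [this]
  rw [Finset.sum_add_distrib]
  simp
  ring

lemma QQ_bt (x : EE m) (s : ℝ) : QQ (x + s • bt) = QQ x + 2 * x.2 * s + s ^ 2 := by
  simp [QQ, bt]
  ring

/-- Maximum principle. -/
lemma max_pr {lam M : ℝ} (hl : 0 < lam) {u : EE m → ℝ} (hu : ContDiffOn ℝ 2 u (halfSpace m))
    (hM : ∀ x ∈ halfSpace m, u x ≤ M) (hz : ∀ y, u (y, 0) = 0)
    {P P1 P2 : ℝ → ℝ} (hP : ContinuousOn P (Ici 0)) (hP0 : ∀ t, 0 ≤ t → 0 ≤ P t)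
    (d1 : ∀ t, 0 < t → HasDerivAt P (P1 t) t) (d2 : ∀ t, 0 < t → HasDerivAt P1 (P2 t) t)
    (hh : ∀ x : EE m, 0 < x.2 → lam * u x - lapP u x ≤ lam * P x.2 - P2 x.2) :
    ∀ x ∈ halfSpace m, u x ≤ P x.2 := by
  intro x0 hx0
  by_contra! hc
  set d := u x0 - P x0.2 with hd
  have hd0 : 0 < d := by linarith
  have hQ0 : 0 ≤ QQ x0 := le_trans (by positivity) (norm_sq_le_QQ x0)
  set D := lam * QQ x0 + 2 * (m + 1) with hD
  have hD0 : 0 < D := by positivity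
  set ε := lam * d / (2 * D) with hε
  have hε0 : 0 < ε := by positivity
  have hεD : ε * D = lam * d / 2 := by rw [hε]; field_simp
  set F : EE m → ℝ := fun x => P x.2 - u x + ε * QQ x with hF
  have hQc : Continuous (QQ : EE m → ℝ) := (QQ_temperate m).1.continuous
  have hFc : ContinuousOn F (halfSpace m) := by
    refine ContinuousOn.add (ContinuousOn.sub ?_ hu.continuousOn) (by fun_prop)
    exact hP.comp continuous_snd.continuousOn (fun x hx => hx)
  have hco : ∀ᶠ x in cocompact (EE m) ⊓ principal (halfSpace m), F x0 ≤ F x := by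
    rw [eventually_inf_principal]
    have := ((tendsto_pow_atTop (two_ne_zero)).comp (tendsto_norm_cocompact_atTop (E := EE m))).const_mul_atTop hε0
    filter_upwards [this.eventually_ge_atTop (F x0 + M)] with x hx hxh
    simp only [Function.comp] at hx
    have a1 := hM x hxh
    have a2 := hP0 x.2 hxh
    have a3 := mul_le_mul_of_nonneg_left (norm_sq_le_QQ x) hε0.le
    simp only [hF] at hx ⊢
    linarith
  obtain ⟨x, hx, hmin⟩ := hFc.exists_isMinOn' half_closed hx0 hco
  have hFx : F x ≤ F x0 := hmin hx0
  have hFx0 : lam * F x0 = - lam * d + ε * (lam * QQ x0) := by simp only [hF, hd]; ring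
  have hQx : 0 ≤ QQ x := le_trans (by positivity) (norm_sq_le_QQ x)
  have hneg : lam * F x0 + 2 * (m + 1) * ε < 0 := by
    rw [hFx0]
    have : ε * D = ε * (lam * QQ x0) + 2 * (m + 1) * ε := by rw [hD]; ring
    nlinarith [mul_pos hl hd0]
  have hlF : lam * F x0 < 0 := by
    have : 0 < 2 * ((m:ℝ) + 1) * ε := by positivity
    linarith
  have hF0 : F x0 < 0 := by
    by_contra! h
    have := mul_nonneg hl.le h
    linarith
  have hx2 : 0 < x.2 := by
    rcases (mem_half.1 hx).eq_or_lt with h | h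
    · exfalso
      have e : u x = 0 := by
        have : x = (x.1, 0) := Prod.ext rfl h.symm
        rw [this]; exact hz _
      have a2 := hP0 x.2 hx
      have : 0 ≤ F x := by
        simp only [hF, e]; have := mul_nonneg hε0.le hQx; linarith
      linarith
    · exact h
  have hloc : IsLocalMin F x := by
    refine mem_of_superset (oh_open.mem_nhds hx2) fun y hy => hmin (oh_sub hy)
  have hlocl : ∀ v : EE m, IsLocalMin (fun s : ℝ => F (x + s • v)) 0 := by
    intro v
    have hcc : ContinuousAt (fun s : ℝ => x + s • v) 0 := by fun_prop
    have h0 : IsLocalMin F (x + (0:ℝ) • v) := by simpa using hloc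
    exact IsMinFilter.comp_tendsto (b := (0:ℝ)) (g := fun s : ℝ => x + s • v) h0 hcc
  have q2 : ∀ c : ℝ, (∀ s : ℝ, HasDerivAt (fun s : ℝ => ε * (QQ x + 2 * c * s + s ^ 2))
      (ε * (2 * c + 2 * s)) s) ∧ HasDerivAt (fun s : ℝ => ε * (2 * c + 2 * s)) (2 * ε) 0 := by
    intro c
    constructor
    · intro s
      refine (((((hasDerivAt_id s).const_mul (2 * c)).const_add (QQ x)).add
        ((hasDerivAt_id s).pow 2)).const_mul ε).congr_deriv ?_
      simp
    · refine ((((hasDerivAt_id (0:ℝ)).const_mul 2).const_add (2 * c)).const_mul ε).congr_deriv ?_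
      simp; ring
  have hbh : ∀ i : Fin m, 0 ≤ - fderiv ℝ (fun y => fderiv ℝ u y (bh i)) x (bh i) + 2 * ε := by
    intro i
    obtain ⟨l1, l2⟩ := line_deriv hu hx2 (bh i)
    have e : (fun s : ℝ => F (x + s • bh i)) = fun s => P x.2 - u (x + s • bh i) +
        ε * (QQ x + 2 * x.1 i * s + s ^ 2) := by
      funext s
      have : (x + s • bh i : EE m).2 = x.2 := by simp [bh]
      simp only [hF, this, QQ_bh]
    have hlm := hlocl (bh i)
    rw [e] at hlm
    refine sd_test (F1 := fun s => - fderiv ℝ u (x + s • bh i) (bh i) + ε * (2 * x.1 i + 2 * s))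
      ?_ ?_ hlm
    · filter_upwards [l1] with s hs
      exact (hs.const_sub (P x.2)).add ((q2 (x.1 i)).1 s)
    · exact l2.neg.add (q2 (x.1 i)).2
  have hbt : 0 ≤ P2 x.2 - fderiv ℝ (fun y => fderiv ℝ u y bt) x bt + 2 * ε := by
    obtain ⟨l1, l2⟩ := line_deriv hu hx2 bt
    have e : (fun s : ℝ => F (x + s • bt)) = fun s => P (x.2 + s) - u (x + s • bt) +
        ε * (QQ x + 2 * x.2 * s + s ^ 2) := by
      funext s
      have : (x + s • bt : EE m).2 = x.2 + s := by simp [bt]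
      simp only [hF, this, QQ_bt]
    have hlm := hlocl bt
    rw [e] at hlm
    refine sd_test (F1 := fun s => P1 (x.2 + s) - fderiv ℝ u (x + s • bt) bt +
      ε * (2 * x.2 + 2 * s)) ?_ ?_ hlm
    · have : ∀ᶠ s : ℝ in nhds 0, 0 < x.2 + s := by
        have hcc : ContinuousAt (fun s : ℝ => x.2 + s) 0 := by fun_prop
        exact hcc (Ioi_mem_nhds (by simpa using hx2))
      filter_upwards [l1, this] with s hs hs2
      exact (((d1 _ hs2).comp_const_add x.2 s).sub hs).add ((q2 x.2).1 s)
    · have h0 : HasDerivAt P1 (P2 x.2) (x.2 + 0) := by simpa using d2 _ hx2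
      exact ((h0.comp_const_add x.2 0).sub l2).add (q2 x.2).2
  have hsum := Finset.sum_nonneg fun i (_ : i ∈ Finset.univ) => hbh i
  rw [Finset.sum_add_distrib, Finset.sum_neg_distrib] at hsum
  simp only [Finset.sum_const, Finset.card_univ, Fintype.card_fin, nsmul_eq_mul] at hsum
  have hq := hh x hx2
  rw [lapP_eq] at hq
  have hlu : lam * (P x.2 - u x) ≤ lam * F x := by
    refine mul_le_mul_of_nonneg_left ?_ hl.le
    simp only [hF]; have := mul_nonneg hε0.le hQx; linarith
  have hlFx := mul_le_mul_of_nonneg_left hFx hl.le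
  nlinarith

lemma lapP_sub {u v : EE m → ℝ} (hu : ContDiffOn ℝ 2 u (halfSpace m))
    (hv : ContDiffOn ℝ 2 v (halfSpace m)) {x : EE m} (hx : 0 < x.2) (a b : ℝ) :
    lapP (fun y => a * u y + b * v y) x = a * lapP u x + b * lapP v x := by
  have key : ∀ z : EE m, fderiv ℝ (fun y => fderiv ℝ (fun y => a * u y + b * v y) y z) x z =
      a * fderiv ℝ (fun y => fderiv ℝ u y z) x z + b * fderiv ℝ (fun y => fderiv ℝ v y z) x z := by
    intro z
    have e : (fun y => fderiv ℝ (fun y => a * u y + b * v y) y z) =ᶠ[nhds x]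
        fun y => a * fderiv ℝ u y z + b * fderiv ℝ v y z := by
      filter_upwards [oh_open.mem_nhds hx] with y hy
      have h1 := ((cd_at hu hy).differentiableAt (by norm_num)).hasFDerivAt
      have h2 := ((cd_at hv hy).differentiableAt (by norm_num)).hasFDerivAt
      rw [((h1.const_mul a).fun_add (h2.const_mul b)).fderiv]
      simp
    rw [e.fderiv_eq, (((fd_diff hu hx z).hasFDerivAt.const_mul a).fun_add
      ((fd_diff hv hx z).hasFDerivAt.const_mul b)).fderiv]
    simp
  rw [lapP_eq, lapP_eq, lapP_eq]
  simp_rw [key]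
  rw [Finset.sum_add_distrib, ← Finset.mul_sum, ← Finset.mul_sum]
  ring

lemma lapP_congr {u v : EE m → ℝ} (h : ∀ x ∈ halfSpace m, u x = v x) {x : EE m} (hx : 0 < x.2) :
    lapP u x = lapP v x := by
  have key : ∀ z : EE m, fderiv ℝ (fun y => fderiv ℝ u y z) x z =
      fderiv ℝ (fun y => fderiv ℝ v y z) x z := by
    intro z
    refine congrArg (fun L : EE m →L[ℝ] ℝ => L z) (EventuallyEq.fderiv_eq ?_)
    filter_upwards [oh_open.mem_nhds hx] with y hy
    refine congrArg (fun L : EE m →L[ℝ] ℝ => L z) (EventuallyEq.fderiv_eq ?_)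
    filter_upwards [oh_open.mem_nhds hy] with y' hy'
    exact h y' (oh_sub hy')
  rw [lapP_eq, lapP_eq]
  simp_rw [key]

end HS

open MeasureTheory Set Filter
open scoped SchwartzMap ContDiff

namespace HS

variable {m : ℕ}

/-- The weight function giving the contraction. -/
lemma weight {f w : ℝ → ℝ} (hf : Monostable f) (hw : IsHeteroclinic f w) :
    ∃ (lam S Q θ L : ℝ) (P P1 P2 : ℝ → ℝ), 0 < lam ∧ 1 ≤ S ∧ 0 < Q ∧ 0 < θ ∧ θ < 1 ∧ 0 ≤ L ∧
      ContinuousOn P (Ici 0) ∧ (∀ t, 0 ≤ t → 1 ≤ P t ∧ P t ≤ S) ∧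
      (∀ t, 0 < t → HasDerivAt P (P1 t) t) ∧ (∀ t, 0 < t → HasDerivAt P1 (P2 t) t) ∧
      (∀ t, 0 ≤ t → 1 ≤ lam + deriv f (w t) ∧ lam + deriv f (w t) ≤ Q) ∧
      (∀ s t, 0 ≤ s → 0 ≤ t → |(lam + deriv f (w s)) - (lam + deriv f (w t))| ≤ L * |s - t|) ∧
      (∀ t, 0 < t → (lam + deriv f (w t)) * P t ≤ θ * (lam * P t - P2 t)) := by
  obtain ⟨fs, f0, f1, fpos, fd1⟩ := hf
  obtain ⟨wc, wode, w0, wlim, wpos, wmono, wd⟩ := hw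
  set W := derivWithin w (Ici 0) with hW
  have uq : UniqueDiffOn ℝ (Ici (0:ℝ)) := uniqueDiffOn_Ici 0
  have hWc : ContDiffOn ℝ 1 W (Ici 0) := wc.derivWithin uq (by norm_num)
  have fdc : ContDiff ℝ 2 f := contDiff_infty.1 fs 2
  have fd2 : ContDiff ℝ 1 (deriv f) := by
    have h : ContDiff ℝ (1 + 1) f := by rw [one_add_one_eq_two]; exact fdc
    exact (contDiff_succ_iff_deriv.1 h).2.2
  have fdd : ∀ s, HasDerivAt f (deriv f s) s := fun s =>
    (fdc.differentiable (by norm_num) s).hasDerivAt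
  have fddd : ∀ s, HasDerivAt (deriv f) (deriv (deriv f) s) s := fun s =>
    (fd2.differentiable (by norm_num) s).hasDerivAt
  -- derivatives of w
  have dwW : ∀ t, 0 ≤ t → HasDerivWithinAt w (W t) (Ici 0) t := fun t ht =>
    (wc.differentiableOn (by norm_num) t ht).hasDerivWithinAt
  have dw : ∀ t, 0 < t → HasDerivAt w (W t) t := fun t ht =>
    (dwW t ht.le).hasDerivAt (Ici_mem_nhds ht)
  have dW : ∀ t, 0 < t → HasDerivAt W (- f (w t)) t := fun t ht => by
    have h := ((hWc.differentiableOn (by norm_num) t ht.le).hasDerivWithinAt).hasDerivAt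
      (Ici_mem_nhds ht)
    refine h.congr_deriv ?_
    have := wode t ht
    linarith
  -- range of w
  have w01 : ∀ t, 0 ≤ t → w t ∈ Icc (0:ℝ) 1 := by
    intro t ht
    constructor
    · rcases ht.eq_or_lt with h | h
      · rw [← h, w0]
      · exact (wpos t h).le
    · refine ge_of_tendsto wlim ?_
      filter_upwards [eventually_ge_atTop t] with s hs
      exact wmono.monotoneOn ht (ht.trans hs) hs
  have fw0 : ∀ t, 0 ≤ t → 0 ≤ f (w t) := by
    intro t ht
    obtain ⟨a, b⟩ := w01 t ht
    rcases a.eq_or_lt with h | h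
    · rw [← h, f0]
    rcases b.eq_or_lt with h' | h'
    · rw [h', f1]
    exact (fpos _ ⟨h, h'⟩).le
  have Wanti : AntitoneOn W (Ici 0) := by
    refine antitoneOn_of_deriv_nonpos (convex_Ici 0) hWc.continuousOn ?_ ?_
    · rw [interior_Ici]
      exact fun t ht => (dW t ht).differentiableAt.differentiableWithinAt
    · rw [interior_Ici]
      intro t ht
      rw [(dW t ht).deriv]
      linarith [fw0 t (le_of_lt ht)]
  have Wpos : ∀ t, 0 ≤ t → 0 < W t := wd
  have Wle : ∀ t, 0 ≤ t → W t ≤ W 0 := fun t ht => Wanti self_mem_Ici ht ht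
  -- bounds
  obtain ⟨B, hB⟩ := (isCompact_Icc (a := (0:ℝ)) (b := 1)).exists_bound_of_continuousOn
    fd2.continuous.continuousOn
  obtain ⟨B2, hB2⟩ := (isCompact_Icc (a := (0:ℝ)) (b := 1)).exists_bound_of_continuousOn
    (fd2.continuous_deriv (by norm_num)).continuousOn
  have hB0 : 0 ≤ B := (norm_nonneg _).trans (hB 0 (by simp))
  have hB20 : 0 ≤ B2 := (norm_nonneg _).trans (hB2 0 (by simp))
  have hBa : ∀ t, 0 ≤ t → - B ≤ deriv f (w t) ∧ deriv f (w t) ≤ B := fun t ht =>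
    abs_le.1 (hB _ (w01 t ht))
  set c := - deriv f 1 / 2 with hc
  have hc0 : 0 < c := by rw [hc]; linarith
  have hlim : Tendsto (fun t => deriv f (w t)) atTop (nhds (deriv f 1)) :=
    (fd2.continuous.tendsto 1).comp wlim
  obtain ⟨T, hT0, hT⟩ : ∃ T, 0 ≤ T ∧ ∀ t, T ≤ t → deriv f (w t) ≤ - c := by
    have := hlim.eventually (Iic_mem_nhds (show deriv f 1 < - c by rw [hc]; linarith))
    obtain ⟨T, hT⟩ := eventually_atTop.1 this
    exact ⟨max T 0, le_max_right _ _, fun t ht => hT t ((le_max_left _ _).trans ht)⟩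
  set A := (B + c) * Real.exp T / W T with hA
  have WT := Wpos T hT0
  have hA0 : 0 < A := by positivity
  have W00 := Wpos 0 le_rfl
  set S := 1 + A * W 0 with hS
  have hS1 : 1 ≤ S := by rw [hS]; linarith [mul_pos hA0 W00]
  set lam := B + 1 with hlam
  have hQ0 : 0 < (2 * B + 1) * S := by positivity
  set Q := (2 * B + 1) * S with hQ
  refine ⟨lam, S, Q, Q / (Q + c), B2 * W 0, fun t => 1 + A * ((1 - Real.exp (-t)) * W t),
    fun t => A * (Real.exp (-t) * W t + (1 - Real.exp (-t)) * (- f (w t))),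
    fun t => A * ((- Real.exp (-t) * W t + Real.exp (-t) * (- f (w t))) +
      (Real.exp (-t) * (- f (w t)) + (1 - Real.exp (-t)) * (- (deriv f (w t) * W t)))),
    by positivity, hS1, hQ0, by positivity, ?_, by positivity, ?_, ?_, ?_, ?_, ?_, ?_, ?_⟩
  · rw [div_lt_one (by positivity)]; linarith
  · refine continuousOn_const.add (continuousOn_const.mul ((Continuous.continuousOn ?_).mul
      hWc.continuousOn))
    fun_prop
  · intro t ht
    have e0 : Real.exp (-t) ≤ 1 := by rw [Real.exp_le_one_iff]; linarith
    have e1 := Real.exp_pos (-t)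
    have h1 := Wpos t ht
    have h2 := Wle t ht
    constructor
    · have : 0 ≤ A * ((1 - Real.exp (-t)) * W t) :=
        mul_nonneg hA0.le (mul_nonneg (by linarith) h1.le)
      linarith
    · have : (1 - Real.exp (-t)) * W t ≤ W 0 := by nlinarith
      have := mul_le_mul_of_nonneg_left this hA0.le
      simp only [hS]; linarith
  · intro t ht
    have he : HasDerivAt (fun t : ℝ => Real.exp (-t)) (- Real.exp (-t)) t := by
      refine ((hasDerivAt_neg t).exp).congr_deriv ?_; ring
    refine ((((he.const_sub 1).mul (dW t ht)).const_mul A).const_add 1).congr_deriv ?_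
    ring
  · intro t ht
    have he : HasDerivAt (fun t : ℝ => Real.exp (-t)) (- Real.exp (-t)) t := by
      refine ((hasDerivAt_neg t).exp).congr_deriv ?_; ring
    have hfw : HasDerivAt (fun t => - f (w t)) (- (deriv f (w t) * W t)) t :=
      ((fdd (w t)).comp t (dw t ht)).neg
    refine (((he.mul (dW t ht)).add ((he.const_sub 1).mul hfw)).const_mul A).congr_deriv ?_
    ring
  · intro t ht
    obtain ⟨a, b⟩ := hBa t ht
    constructor
    · rw [hlam]; linarith
    · have : (2 * B + 1) * 1 ≤ Q := mul_le_mul_of_nonneg_left hS1 (by linarith)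
      rw [hlam]; linarith
  · intro s t hs ht
    have := Convex.norm_image_sub_le_of_norm_hasDerivWithin_le (s := Ici (0:ℝ))
      (f := fun t => deriv f (w t)) (f' := fun t => deriv (deriv f) (w t) * W t) (C := B2 * W 0)
      (fun x hx => (fddd (w x)).comp_hasDerivWithinAt x (dwW x hx)) (fun x hx => by
        rw [norm_mul]
        refine mul_le_mul (hB2 _ (w01 x hx)) ?_ (norm_nonneg _) hB20
        rw [Real.norm_of_nonneg (Wpos x hx).le]
        exact Wle x hx) (convex_Ici 0) (x := t) (y := s) ht hs
    simpa [Real.norm_eq_abs] using this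
  · intro t ht
    obtain ⟨a, b⟩ := hBa t ht.le
    have e0 : Real.exp (-t) ≤ 1 := by rw [Real.exp_le_one_iff]; linarith
    have e1 := Real.exp_pos (-t)
    have h1 := Wpos t ht.le
    have h2 := Wle t ht.le
    have h3 := fw0 t ht.le
    set P := 1 + A * ((1 - Real.exp (-t)) * W t) with hP
    have hPS : P ≤ S := by
      have : (1 - Real.exp (-t)) * W t ≤ W 0 := by nlinarith
      have := mul_le_mul_of_nonneg_left this hA0.le
      simp only [hS, hP]; linarith
    have hP1 : 1 ≤ P := by
      have : 0 ≤ A * ((1 - Real.exp (-t)) * W t) :=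
        mul_nonneg hA0.le (mul_nonneg (by linarith) h1.le)
      linarith
    have key : deriv f (w t) - A * (Real.exp (-t) * (W t + 2 * f (w t))) ≤ - c := by
      rcases le_total T t with h | h
      · have : 0 ≤ A * (Real.exp (-t) * (W t + 2 * f (w t))) := by positivity
        linarith [hT t h]
      · have g1 : Real.exp (-T) ≤ Real.exp (-t) := Real.exp_le_exp.2 (by linarith)
        have g2 : W T ≤ W t + 2 * f (w t) := by
          have := Wanti ht.le hT0 h
          linarith
        have g3 : A * (Real.exp (-T) * W T) = B + c := by
          rw [hA, Real.exp_neg]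
          field_simp
        have g4 : A * (Real.exp (-T) * W T) ≤ A * (Real.exp (-t) * (W t + 2 * f (w t))) := by
          gcongr
        linarith
    have hqP : (lam + deriv f (w t)) * P ≤ Q := by
      rw [hQ]
      refine mul_le_mul ?_ hPS (by linarith) (by linarith)
      rw [hlam]; linarith
    have hmain : (lam + deriv f (w t)) * P + c ≤ lam * P - A * ((- Real.exp (-t) * W t +
        Real.exp (-t) * (- f (w t))) + (Real.exp (-t) * (- f (w t)) +
        (1 - Real.exp (-t)) * (- (deriv f (w t) * W t)))) := by
      have : deriv f (w t) * P = deriv f (w t) +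
        A * (1 - Real.exp (-t)) * W t * deriv f (w t) := by rw [hP]; ring
      nlinarith
    show (lam + deriv f (w t)) * P ≤ _
    refine le_trans ?_ (mul_le_mul_of_nonneg_left hmain (by positivity))
    rw [div_mul_eq_mul_div, le_div_iff₀ (by positivity)]
    nlinarith

end HS

open MeasureTheory Set Filter
open scoped SchwartzMap ContDiff

namespace HS

variable {m : ℕ}

/-- bounded classical solutions of the constant coefficient problem -/
structure Sol (lam : ℝ) (h u : EE m → ℝ) : Prop where
  cd : ContDiffOn ℝ 2 u (halfSpace m)
  eq : ∀ x : EE m, 0 < x.2 → lam * u x - lapP u x = h x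
  bc : ∀ y, u (y, 0) = 0
  bd : ∃ M, ∀ x ∈ halfSpace m, |u x| ≤ M

lemma Sol.lin {lam : ℝ} {h k u v : EE m → ℝ} (H : Sol lam h u) (H' : Sol lam k v) (a b : ℝ) :
    Sol lam (fun x => a * h x + b * k x) (fun x => a * u x + b * v x) := by
  obtain ⟨M, hM⟩ := H.bd
  obtain ⟨N, hN⟩ := H'.bd
  refine ⟨(contDiffOn_const.mul H.cd).add (contDiffOn_const.mul H'.cd), fun x hx => ?_,
    fun y => by simp [H.bc, H'.bc], |a| * M + |b| * N, fun x hx => ?_⟩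
  · rw [lapP_sub H.cd H'.cd hx, ← H.eq x hx, ← H'.eq x hx]
    ring
  · refine (abs_add_le _ _).trans ?_
    rw [abs_mul, abs_mul]
    exact add_le_add (mul_le_mul_of_nonneg_left (hM x hx) (abs_nonneg a))
      (mul_le_mul_of_nonneg_left (hN x hx) (abs_nonneg b))

lemma Sol.congr {lam : ℝ} {h k u : EE m → ℝ} (H : Sol lam h u)
    (e : ∀ x : EE m, 0 < x.2 → k x = h x) : Sol lam k u :=
  ⟨H.cd, fun x hx => by rw [H.eq x hx, e x hx], H.bc, H.bd⟩

lemma Sol.congr_fun {lam : ℝ} {h u v : EE m → ℝ} (H : Sol lam h u)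
    (e : ∀ x ∈ halfSpace m, v x = u x) : Sol lam h v := by
  obtain ⟨M, hM⟩ := H.bd
  exact ⟨H.cd.congr e, fun x hx => by
    rw [lapP_congr e hx, e x (oh_sub hx), H.eq x hx],
    fun y => by rw [e _ (mem_half.2 le_rfl), H.bc], M, fun x hx => by rw [e x hx]; exact hM x hx⟩

/-- data of the weight -/
structure Wt (lam S Q θ L : ℝ) (q P P1 P2 : ℝ → ℝ) : Prop where
  lam0 : 0 < lam
  S1 : 1 ≤ S
  Q0 : 0 < Q
  th0 : 0 < θ
  th1 : θ < 1
  L0 : 0 ≤ L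
  Pc : ContinuousOn P (Ici 0)
  PS : ∀ t, 0 ≤ t → 1 ≤ P t ∧ P t ≤ S
  d1 : ∀ t, 0 < t → HasDerivAt P (P1 t) t
  d2 : ∀ t, 0 < t → HasDerivAt P1 (P2 t) t
  qQ : ∀ t, 0 ≤ t → 1 ≤ q t ∧ q t ≤ Q
  qL : ∀ s t, 0 ≤ s → 0 ≤ t → |q s - q t| ≤ L * |s - t|
  ct : ∀ t, 0 < t → q t * P t ≤ θ * (lam * P t - P2 t)

section
variable {lam S Q θ L : ℝ} {q P P1 P2 : ℝ → ℝ}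

lemma Wt.cmp (D : Wt lam S Q θ L q P P1 P2) {h u : EE m → ℝ} (H : Sol lam h u) {K : ℝ}
    (hK : 0 ≤ K) (hh : ∀ x : EE m, 0 < x.2 → |h x| ≤ K * (q x.2 * P x.2)) :
    ∀ x ∈ halfSpace m, |u x| ≤ K * θ * P x.2 := by
  have one : ∀ {h u : EE m → ℝ}, Sol lam h u →
      (∀ x : EE m, 0 < x.2 → |h x| ≤ K * (q x.2 * P x.2)) →
      ∀ x ∈ halfSpace m, u x ≤ K * θ * P x.2 := by
    intro h u H hh
    obtain ⟨M, hM⟩ := H.bd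
    have hKt : 0 ≤ K * θ := mul_nonneg hK D.th0.le
    refine max_pr (P := fun t => K * θ * P t) (P1 := fun t => K * θ * P1 t)
      (P2 := fun t => K * θ * P2 t) D.lam0 H.cd (fun x hx => (le_abs_self _).trans (hM x hx)) H.bc
      (continuousOn_const.mul D.Pc)
      (fun t ht => mul_nonneg hKt (by linarith [(D.PS t ht).1]))
      (fun t ht => (D.d1 t ht).const_mul _) (fun t ht => (D.d2 t ht).const_mul _) ?_
    intro x hx
    rw [H.eq x hx]
    refine (le_abs_self _).trans ((hh x hx).trans ?_)
    have := mul_le_mul_of_nonneg_left (D.ct x.2 hx) hK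
    refine this.trans (le_of_eq ?_)
    ring
  intro x hx
  refine abs_le.2 ⟨?_, one H hh x hx⟩
  have H' := H.lin H (-1) 0
  have := one H' (fun x hx => by simpa using hh x hx) x hx
  linarith

/-- bounded solutions of the full problem -/
def RS (lam : ℝ) (q : ℝ → ℝ) (g φ : EE m → ℝ) : Prop :=
  Sol lam (fun x => q x.2 * φ x - g x) φ

lemma RS.lin {g k φ ψ : EE m → ℝ} (H : RS lam q g φ) (H' : RS lam q k ψ) (a b : ℝ) :
    RS lam q (fun x => a * g x + b * k x) (fun x => a * φ x + b * ψ x) :=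
  (Sol.lin H H' a b).congr fun x _ => by ring

lemma RS.congr_fun {g φ ψ : EE m → ℝ} (H : RS lam q g φ) (e : ∀ x ∈ halfSpace m, ψ x = φ x) :
    RS lam q g ψ :=
  (Sol.congr_fun H e).congr fun x hx => by rw [e x (oh_sub hx)]

lemma Wt.unique0 (D : Wt lam S Q θ L q P P1 P2) {φ : EE m → ℝ}
    (H : Sol lam (fun x => q x.2 * φ x) φ) : ∀ x ∈ halfSpace m, φ x = 0 := by
  obtain ⟨M, hM⟩ := H.bd
  have hM0 : 0 ≤ M := (abs_nonneg _).trans (hM 0 (mem_half.2 le_rfl))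
  have key : ∀ n : ℕ, ∀ x ∈ halfSpace m, |φ x| ≤ M * θ ^ n * P x.2 := by
    intro n
    induction n with
    | zero =>
      intro x hx
      have := (D.PS x.2 hx).1
      refine (hM x hx).trans ?_
      nlinarith
    | succ n ih =>
      have := D.cmp H (K := M * θ ^ n) (mul_nonneg hM0 (pow_nonneg D.th0.le n)) (fun x hx => by
        have h1 := (D.qQ x.2 hx.le).1
        rw [abs_mul, abs_of_nonneg (by linarith : 0 ≤ q x.2)]
        have := mul_le_mul_of_nonneg_left (ih x (oh_sub hx)) (by linarith : 0 ≤ q x.2)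
        refine this.trans (le_of_eq ?_)
        ring)
      intro x hx
      refine (this x hx).trans (le_of_eq ?_)
      ring
  intro x hx
  have hl : Tendsto (fun n : ℕ => M * θ ^ n * P x.2) atTop (nhds (M * 0 * P x.2)) :=
    ((tendsto_pow_atTop_nhds_zero_of_lt_one D.th0.le D.th1).const_mul M).mul_const _
  have := ge_of_tendsto' hl (fun n => key n x hx)
  have : |φ x| ≤ 0 := by simpa using this
  exact abs_nonpos_iff.1 this

lemma Wt.unique (D : Wt lam S Q θ L q P P1 P2) {g φ ψ : EE m → ℝ}
    (H : RS lam q g φ) (H' : RS lam q g ψ) : ∀ x ∈ halfSpace m, φ x = ψ x := by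
  have h : Sol lam (fun x => q x.2 * (1 * φ x + (-1) * ψ x)) (fun x => 1 * φ x + (-1) * ψ x) :=
    (Sol.lin H H' 1 (-1)).congr fun x _ => by ring
  intro x hx
  have := D.unique0 h x hx
  linarith

lemma hl_mul {X : Type*} [PseudoMetricSpace X] {σ : ℝ} {Λ : Set X} {f g : X → ℝ} {A B : ℝ}
    (hA : 0 ≤ A) (hf : HolderLe σ Λ f A) (hg : HolderLe σ Λ g B) :
    HolderLe σ Λ (fun x => f x * g x) (2 * A * B) := by
  refine ⟨fun x hx => ?_, fun x hx y hy => ?_⟩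
  · have hB : 0 ≤ B := (norm_nonneg _).trans (hg.1 x hx)
    rw [norm_mul]
    have := mul_le_mul (hf.1 x hx) (hg.1 x hx) (norm_nonneg _) hA
    nlinarith [mul_nonneg hA hB]
  · have hB : 0 ≤ B := (norm_nonneg _).trans (hg.1 x hx)
    have e : f x * g x - f y * g y = f x * (g x - g y) + (f x - f y) * g y := by ring
    rw [e]
    refine (norm_add_le _ _).trans ?_
    rw [norm_mul, norm_mul]
    have h1 := mul_le_mul (hf.1 x hx) (hg.2 x hx y hy) (norm_nonneg _) hA
    have h2 := mul_le_mul (hf.2 x hx y hy) (hg.1 y hy) (norm_nonneg _)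
      (mul_nonneg hA (by positivity))
    refine (add_le_add h1 h2).trans (le_of_eq ?_)
    ring

lemma Wt.q_hl (D : Wt lam S Q θ L q P P1 P2) {σ : ℝ} (h0 : 0 < σ) (h1 : σ < 1) :
    HolderLe σ (halfSpace m) (fun x => q x.2) (2 * Q + L) := by
  have hL := D.L0
  have hQ := D.Q0
  refine ⟨fun x hx => ?_, fun x hx y hy => ?_⟩
  · obtain ⟨a, b⟩ := D.qQ x.2 hx
    rw [Real.norm_of_nonneg (by linarith)]
    linarith
  · obtain ⟨a, b⟩ := D.qQ x.2 hx
    obtain ⟨a', b'⟩ := D.qQ y.2 hy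
    rw [Real.norm_eq_abs]
    rcases le_total (dist x y) 1 with h | h
    · have e1 : |x.2 - y.2| ≤ dist x y := by
        rw [Prod.dist_eq, ← Real.dist_eq]; exact le_max_right _ _
      have e2 : dist x y ≤ dist x y ^ σ := by
        rcases (dist_nonneg (x := x) (y := y)).eq_or_lt with h' | h'
        · rw [← h']; positivity
        · have := Real.rpow_le_rpow_of_exponent_ge h' h h1.le
          rwa [Real.rpow_one] at this
      refine (D.qL _ _ hx hy).trans ?_
      refine (mul_le_mul_of_nonneg_left (e1.trans e2) hL).trans ?_
      have : 0 ≤ dist x y ^ σ := by positivity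
      nlinarith
    · have e2 : 1 ≤ dist x y ^ σ := Real.one_le_rpow h h0.le
      have : |q x.2 - q y.2| ≤ 2 * Q := by rw [abs_le]; constructor <;> linarith
      refine this.trans ?_
      nlinarith

lemma Wt.exist (D : Wt lam S Q θ L q P P1 P2) (m : ℕ) {σ : ℝ} (h0 : 0 < σ) (h1 : σ < 1) :
    ∃ C, 0 < C ∧ ∀ (g : EE m → ℝ) (K : ℝ), HolderLe σ (halfSpace m) g K →
      ∃ φ : EE m → ℝ, RS lam q g φ ∧ HolderLe σ (halfSpace m) φ (C * K) ∧
        HolderLe σ (halfSpace m) (iteratedFDerivWithin ℝ 2 φ (halfSpace m)) (C * K) := by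
  obtain ⟨C, hC, G, hG⟩ := lemmaS m D.lam0 h0 h1
  have hth : 0 < 1 - θ := by linarith [D.th1]
  have hS1 := D.S1
  have hS0 : 0 < S := by linarith [D.S1]
  have hQ := D.Q0
  have hL := D.L0
  set M1 := S / (1 - θ) with hM1
  have hM10 : 0 < M1 := by positivity
  set C1 := C * (Q * M1 + 1) with hC1
  have hC10 : 0 < C1 := by positivity
  set C2 := 2 * (2 * Q + L) * C1 + 1 with hC2
  have hC20 : 0 < C2 := by positivity
  refine ⟨C * C2, by positivity, fun g K hg => ?_⟩
  have hK0 : 0 ≤ K := (norm_nonneg _).trans (hg.1 0 (mem_half.2 le_rfl))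
  have GSol : ∀ {h K}, HolderLe σ (halfSpace m) h K → Sol lam h (G h) := fun {h K} hh => by
    obtain ⟨a, b, c, d, e⟩ := hG h K K hh hh.1
    exact ⟨a, b, c, _, d.1⟩
  have qh := D.q_hl (m := m) h0 h1
  have rhs : ∀ {u : EE m → ℝ} {B}, HolderLe σ (halfSpace m) u B →
      HolderLe σ (halfSpace m) (fun x => q x.2 * u x - g x) (2 * (2 * Q + L) * B + K) :=
    fun hu => hl_sub (hl_mul (by positivity) qh hu) hg
  let s : ℕ → EE m → ℝ := fun n => Nat.rec (fun _ => 0) (fun _ u => G (fun x => q x.2 * u x - g x)) n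
  have s0 : s 0 = fun _ => 0 := rfl
  have sS : ∀ n, s (n + 1) = G (fun x => q x.2 * s n x - g x) := fun n => rfl
  have sh : ∀ n, ∃ B, HolderLe σ (halfSpace m) (s n) B := by
    intro n
    induction n with
    | zero => exact ⟨0, by rw [s0]; constructor <;> simp⟩
    | succ n ih =>
      obtain ⟨B, hB⟩ := ih
      rw [sS]
      exact ⟨_, (hG _ _ _ (rhs hB) (rhs hB).1).2.2.2.1⟩
  have sSol : ∀ n, Sol lam (fun x => q x.2 * s n x - g x) (s (n + 1)) := by
    intro n
    obtain ⟨B, hB⟩ := sh n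
    exact GSol (rhs hB)
  have qp : ∀ {x : EE m}, x ∈ halfSpace m → 1 ≤ q x.2 := fun {x} hx => (D.qQ x.2 hx).1
  have Pp : ∀ {x : EE m}, x ∈ halfSpace m → 1 ≤ P x.2 := fun {x} hx => (D.PS x.2 hx).1
  have sd : ∀ n, ∀ x ∈ halfSpace m, |s n x - s (n + 1) x| ≤ K * θ ^ (n + 1) * P x.2 := by
    intro n
    induction n with
    | zero =>
      intro x hx
      have := D.cmp (sSol 0) hK0 (fun x hx => by
        have a1 := qp (oh_sub hx)
        have a2 := Pp (oh_sub hx)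
        have a3 : |g x| ≤ K := hg.1 x (oh_sub hx)
        simp only [s0, mul_zero, zero_sub, abs_neg]
        have : 1 ≤ q x.2 * P x.2 := by nlinarith
        nlinarith) x hx
      simpa [s0] using this
    | succ n ih =>
      intro x hx
      have hs := ((sSol n).lin (sSol (n + 1)) 1 (-1)).congr
        (k := fun x => q x.2 * (s n x - s (n + 1) x)) (fun x _ => by ring)
      have := D.cmp hs (K := K * θ ^ (n + 1)) (mul_nonneg hK0 (pow_nonneg D.th0.le _))
        (fun x hx => by
          have a1 := qp (oh_sub hx)
          rw [abs_mul, abs_of_nonneg (by linarith : 0 ≤ q x.2)]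
          refine (mul_le_mul_of_nonneg_left (ih x (oh_sub hx)) (by linarith)).trans (le_of_eq ?_)
          ring) x hx
      rw [one_mul, neg_one_mul, ← sub_eq_add_neg] at this
      refine this.trans (le_of_eq ?_)
      ring
  have sd' : ∀ x ∈ halfSpace m, ∀ n, dist (s n x) (s (n + 1) x) ≤ K * S * θ ^ n := by
    intro x hx n
    rw [Real.dist_eq]
    refine (sd n x hx).trans ?_
    have a := (D.PS x.2 hx).2
    have b := Pp hx
    have c : θ ^ (n + 1) ≤ θ ^ n := pow_le_pow_of_le_one D.th0.le D.th1.le (by lia)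
    have d := pow_nonneg D.th0.le n
    calc K * θ ^ (n + 1) * P x.2 ≤ K * θ ^ n * S := by gcongr
      _ = _ := by ring
  have lim : ∀ x ∈ halfSpace m, ∃ l, Tendsto (fun n => s n x) atTop (nhds l) := fun x hx =>
    cauchySeq_tendsto_of_complete (cauchySeq_of_le_geometric θ (K * S) D.th1 (sd' x hx))
  choose! φ hφ using lim
  have sφ : ∀ x ∈ halfSpace m, ∀ n, |s n x - φ x| ≤ K * M1 * θ ^ n := by
    intro x hx n
    have := dist_le_of_le_geometric_of_tendsto θ (K * S) D.th1 (sd' x hx) (hφ x hx) n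
    rw [Real.dist_eq] at this
    refine this.trans (le_of_eq ?_)
    rw [hM1]; ring
  have sb : ∀ n, ∀ x ∈ halfSpace m, |s n x| ≤ K * M1 := by
    intro n x hx
    have h := dist_le_of_le_geometric_of_tendsto₀ θ (K * S) D.th1 (sd' x hx) (hφ x hx)
    have : ∀ n, dist (s 0 x) (s n x) ≤ K * M1 := by
      intro n
      refine (dist_le_range_sum_of_dist_le (f := fun n => s n x) n
        (d := fun n => K * S * θ ^ n) (fun {k} _ => sd' x hx k)).trans ?_
      rw [← Finset.mul_sum]
      have : ∑ i ∈ Finset.range n, θ ^ i ≤ (1 - θ)⁻¹ := by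
        rw [← tsum_geometric_of_lt_one D.th0.le D.th1]
        exact (summable_geometric_of_lt_one D.th0.le D.th1).sum_le_tsum _
          (fun i _ => pow_nonneg D.th0.le i)
      refine (mul_le_mul_of_nonneg_left this (by positivity)).trans (le_of_eq ?_)
      rw [hM1]; ring
    have := this n
    simpa [s0, Real.dist_eq] using this
  have shu : ∀ n, HolderLe σ (halfSpace m) (s (n + 1)) (C1 * K) := by
    intro n
    obtain ⟨B, hB⟩ := sh n
    have := (hG _ _ (Q * (K * M1) + K) (rhs hB) (fun x hx => by
      refine (abs_sub _ _).trans (add_le_add ?_ (hg.1 x hx))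
      obtain ⟨a, b⟩ := D.qQ x.2 hx
      rw [abs_mul, abs_of_nonneg (by linarith : 0 ≤ q x.2)]
      exact mul_le_mul b (sb n x hx) (abs_nonneg _) hQ.le)).2.2.2.1
    rw [sS]
    refine hl_mono this (le_of_eq ?_)
    rw [hC1]; ring
  have φh : HolderLe σ (halfSpace m) φ (C1 * K) := by
    refine ⟨fun x hx => ?_, fun x hx y hy => ?_⟩
    · exact le_of_tendsto' ((tendsto_add_atTop_iff_nat 1).2 (hφ x hx)).norm
        (fun n => (shu n).1 x hx)
    · exact le_of_tendsto' (((tendsto_add_atTop_iff_nat 1).2 (hφ x hx)).sub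
        ((tendsto_add_atTop_iff_nat 1).2 (hφ y hy))).norm (fun n => (shu n).2 x hx y hy)
  have rφ : HolderLe σ (halfSpace m) (fun x => q x.2 * φ x - g x) (C2 * K) :=
    hl_mono (rhs φh) (le_of_eq (by rw [hC2]; ring))
  have Sφ := GSol rφ
  set ψ := G (fun x => q x.2 * φ x - g x) with hψ
  have e : ∀ x ∈ halfSpace m, ψ x = φ x := by
    have key : ∀ n, ∀ x ∈ halfSpace m, |s (n + 1) x - ψ x| ≤ K * M1 * θ ^ n * θ * P x.2 := by
      intro n x hx
      have hs := ((sSol n).lin Sφ 1 (-1)).congr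
        (k := fun x => q x.2 * (s n x - φ x)) (fun x _ => by ring)
      have := D.cmp hs (K := K * M1 * θ ^ n)
        (mul_nonneg (by positivity) (pow_nonneg D.th0.le _))
        (fun x hx => by
          have a1 := qp (oh_sub hx)
          have a2 := Pp (oh_sub hx)
          have a3 := sφ x (oh_sub hx) n
          rw [abs_mul, abs_of_nonneg (by linarith : 0 ≤ q x.2)]
          have a4 : |s n x - φ x| ≤ K * M1 * θ ^ n * P x.2 :=
            a3.trans (le_mul_of_one_le_right ((abs_nonneg _).trans a3) a2)
          refine (mul_le_mul_of_nonneg_left a4 (by linarith)).trans (le_of_eq ?_)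
          ring) x hx
      rwa [one_mul, neg_one_mul, ← sub_eq_add_neg] at this
    intro x hx
    have l1 : Tendsto (fun n : ℕ => K * M1 * θ ^ n * θ * P x.2) atTop
        (nhds (K * M1 * 0 * θ * P x.2)) :=
      (((tendsto_pow_atTop_nhds_zero_of_lt_one D.th0.le D.th1).const_mul _).mul_const _).mul_const _
    have l2 := (((tendsto_add_atTop_iff_nat 1).2 (hφ x hx)).sub_const (ψ x)).abs
    have := le_of_tendsto_of_tendsto' l2 l1 (fun n => key n x hx)
    have h0 : |φ x - ψ x| ≤ 0 := by simpa using this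
    have := abs_nonpos_iff.1 h0
    linarith
  refine ⟨ψ, Sφ.congr fun x hx => by rw [e x (oh_sub hx)], ?_, ?_⟩
  · have := (hG _ _ _ rφ rφ.1).2.2.2.1
    exact hl_mono this (le_of_eq (by ring))
  · have := (hG _ _ _ rφ rφ.1).2.2.2.2
    exact hl_mono this (le_of_eq (by ring))

end

end HS

open MeasureTheory Set Filter
open scoped SchwartzMap ContDiff

namespace HS

variable {m : ℕ}

/-- functions with finite Hölder norm -/
def Wsp (m : ℕ) (σ : ℝ) : Submodule ℝ (EE m → ℝ) where
  carrier := {g | ∃ K, HolderLe σ (halfSpace m) g K}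
  add_mem' := fun ⟨A, hA⟩ ⟨B, hB⟩ => ⟨A + B, hl_add hA hB⟩
  zero_mem' := ⟨0, by constructor <;> simp⟩
  smul_mem' := fun c g ⟨A, hA⟩ => ⟨|c| * A, by
    refine ⟨fun x hx => ?_, fun x hx y hy => ?_⟩
    · rw [Pi.smul_apply, norm_smul]
      exact mul_le_mul_of_nonneg_left (hA.1 x hx) (abs_nonneg c)
    · rw [Pi.smul_apply, Pi.smul_apply, ← smul_sub, norm_smul, mul_assoc]
      exact mul_le_mul_of_nonneg_left (hA.2 x hx y hy) (abs_nonneg c)⟩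

lemma final (m : ℕ) (σ : ℝ) (hσ : σ ∈ Set.Ioo (0:ℝ) 1) (f w : ℝ → ℝ)
    (hf : Monostable f) (hw : IsHeteroclinic f w) :
    ∃ C, 0 < C ∧ ∃ T : (EE m → ℝ) → (EE m → ℝ), IsLinearMap ℝ T ∧ ∀ (g : EE m → ℝ) (K : ℝ),
      HolderLe σ (halfSpace m) g K →
      ContDiffOn ℝ 2 (T g) (halfSpace m) ∧
      (∀ y t, 0 < t → lapP (T g) (y, t) + deriv f (w t) * T g (y, t) = g (y, t)) ∧
      (∀ y, T g (y, 0) = 0) ∧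
      HolderLe σ (halfSpace m) (T g) (C * K) ∧
      HolderLe σ (halfSpace m) (iteratedFDerivWithin ℝ 2 (T g) (halfSpace m)) (C * K) := by
  obtain ⟨lam, S, Q, θ, L, P, P1, P2, a1, a2, a3, a4, a5, a6, a7, a8, a9, a10, a11, a12, a13⟩ :=
    weight hf hw
  have D : Wt lam S Q θ L (fun t => lam + deriv f (w t)) P P1 P2 :=
    ⟨a1, a2, a3, a4, a5, a6, a7, a8, a9, a10, a11, a12, a13⟩
  set q : ℝ → ℝ := fun t => lam + deriv f (w t) with hq
  obtain ⟨C, hC, hE⟩ := D.exist m hσ.1 hσ.2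
  have hE' : ∀ g : Wsp m σ, ∃ φ : EE m → ℝ, RS lam q g.1 φ := fun g => by
    obtain ⟨K, hK⟩ := g.2
    obtain ⟨φ, h, _⟩ := hE g.1 K hK
    exact ⟨φ, h⟩
  choose φ hφ using hE'
  have key : ∀ (g : Wsp m σ) (ψ : EE m → ℝ), RS lam q g.1 ψ →
      (halfSpace m).indicator (φ g) = (halfSpace m).indicator ψ := fun g ψ h => by
    exact indicator_congr fun x hx => D.unique (hφ g) h x hx
  let T0 : Wsp m σ →ₗ[ℝ] (EE m → ℝ) :=
    { toFun := fun g => (halfSpace m).indicator (φ g)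
      map_add' := fun g h => by
        have := (hφ g).lin (hφ h) 1 1
        simp only [one_mul] at this
        rw [key (g + h) _ this]
        exact indicator_add _ _ _
      map_smul' := fun c g => by
        have := (hφ g).lin (hφ g) c 0
        simp only [zero_mul, add_zero] at this
        rw [key (c • g) _ this]
        exact indicator_const_smul _ c (φ g) }
  obtain ⟨T, hT⟩ := LinearMap.exists_extend T0
  refine ⟨C, hC, T, T.isLinear, fun g K hg => ?_⟩
  obtain ⟨ψ, h1, h2, h3⟩ := hE g K hg
  have hTg : T g = (halfSpace m).indicator ψ := by
    have := LinearMap.congr_fun hT (⟨g, K, hg⟩ : Wsp m σ)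
    exact this.trans (key _ ψ h1)
  have e : ∀ x ∈ halfSpace m, T g x = ψ x := fun x hx => by
    rw [hTg, indicator_of_mem hx]
  have R := h1.congr_fun e
  refine ⟨R.cd, fun y t ht => ?_, R.bc, hl_congr h2 e, hl_congr h3 fun x hx =>
    iteratedFDerivWithin_congr e hx 2⟩
  have := R.eq (y, t) ht
  simp only [hq] at this
  linarith

end HS

/-- Linear solvability for the Dirichlet problem in a half-space:
there is a linear solution operator `g ↦ φ` for `Δφ + f'(w(t))φ = g`, `φ(y,0) = 0`,
with the uniform estimate `‖φ‖_{C^{2,σ}} ≤ C ‖g‖_{C^{0,σ}}`. -/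
theorem half_space_linear_theory_dirichlet (m : ℕ) (hm : 1 ≤ m) (σ : ℝ)
    (hσ : σ ∈ Set.Ioo (0 : ℝ) 1) (f w : ℝ → ℝ) (hf : Monostable f)
    (hw : IsHeteroclinic f w) :
    ∃ C > (0 : ℝ),
      ∃ T : (EuclideanSpace ℝ (Fin m) × ℝ → ℝ) → (EuclideanSpace ℝ (Fin m) × ℝ → ℝ),
        IsLinearMap ℝ T ∧
        ∀ (g : EuclideanSpace ℝ (Fin m) × ℝ → ℝ) (Kg : ℝ), 0 ≤ Kg →
          HolderLe σ (halfSpace m) g Kg →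
          ContDiffOn ℝ 2 (T g) (halfSpace m) ∧
          (∀ (y : EuclideanSpace ℝ (Fin m)) (t : ℝ), 0 < t →
            lapP (T g) (y, t) + deriv f (w t) * (T g) (y, t) = g (y, t)) ∧
          (∀ y : EuclideanSpace ℝ (Fin m), (T g) (y, 0) = 0) ∧
          HolderLe σ (halfSpace m) (T g) (C * Kg) ∧
          HolderLe σ (halfSpace m)
            (iteratedFDerivWithin ℝ 2 (T g) (halfSpace m)) (C * Kg) := by
  obtain ⟨C, hC, T, hT, h⟩ := HS.final m σ hσ f w hf hw
  exact ⟨C, hC, T, hT, fun g Kg _ hg => h g Kg hg⟩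
end

section
/- Let I ⊆ (0, π/2) be an open interval, let g : I → ℝ be twice differentiable with g(θ) > 0 for all θ ∈ I, let q : I → ℝ be twice differentiable, and let β ∈ ℝ. Define w̃₀(θ) = sin³(2θ) / (9 g(θ)² + g'(θ)²)^{3/2}. Then for every θ ∈ I the following identity holds: 9 · d/dθ( g² w̃₀ q' ) − 3β · d/dθ( g g' q w̃₀ ) + w̃₀ (β + 4) ( β g'² q − 3 g g' q' ) = 9 g^{(β+4)/3} · d/dθ( w̃₀ g^{2/3} · d/dθ( g^{−β/3} q ) ). In particular, the left-hand side vanishes identically when q = g^{β/3}. -/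
open Set Real

/-- The angular weight `w̃₀(θ) = sin³(2θ) / (9g² + g'²)^{3/2}`. -/
noncomputable def wTilde (g : ℝ → ℝ) (θ : ℝ) : ℝ :=
  Real.sin (2 * θ) ^ 3 / (9 * g θ ^ 2 + deriv g θ ^ 2) ^ ((3 : ℝ) / 2)

/-- The weight is differentiable wherever `g > 0` and `g` is twice differentiable. -/
lemma wTilde_diff (g : ℝ → ℝ) (θ : ℝ) (h1 : DifferentiableAt ℝ g θ)
    (h2 : DifferentiableAt ℝ (deriv g) θ) (h0 : 0 < g θ) :
    DifferentiableAt ℝ (wTilde g) θ := by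
  have hp : 0 < 9 * g θ ^ 2 + deriv g θ ^ 2 := by positivity
  have hd : DifferentiableAt ℝ (fun t => 9 * g t ^ 2 + deriv g t ^ 2) θ := by fun_prop
  have hr := hd.rpow_const (p := (3 : ℝ) / 2) (Or.inl hp.ne')
  have hs : DifferentiableAt ℝ (fun t : ℝ => Real.sin (2 * t) ^ 3) θ := by fun_prop
  exact hs.div hr (Real.rpow_pos_of_pos hp _).ne'

/-- The divergence identity at all points of an open set. -/
lemma divergence_aux (I : Set ℝ) (hI : IsOpen I) (g q : ℝ → ℝ) (β : ℝ)
    (hg : ∀ θ ∈ I, DifferentiableAt ℝ g θ)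
    (hg' : ∀ θ ∈ I, DifferentiableAt ℝ (deriv g) θ)
    (hq : ∀ θ ∈ I, DifferentiableAt ℝ q θ)
    (hq' : ∀ θ ∈ I, DifferentiableAt ℝ (deriv q) θ)
    (hgpos : ∀ θ ∈ I, 0 < g θ) (θ : ℝ) (hθ : θ ∈ I) :
      9 * deriv (fun t => g t ^ 2 * wTilde g t * deriv q t) θ
        - 3 * β * deriv (fun t => g t * deriv g t * q t * wTilde g t) θ
        + wTilde g θ * (β + 4) *
            (β * deriv g θ ^ 2 * q θ - 3 * g θ * deriv g θ * deriv q θ)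
      = 9 * g θ ^ ((β + 4) / 3) *
          deriv (fun t => wTilde g t * g t ^ ((2 : ℝ) / 3) *
            deriv (fun s => g s ^ (-(β / 3)) * q s) t) θ := by
  have hw := wTilde_diff g θ (hg θ hθ) (hg' θ hθ) (hgpos θ hθ)
  have h1 := hg θ hθ
  have h2 := hg' θ hθ
  have h3 := hq θ hθ
  have h4 := hq' θ hθ
  have h0 := hgpos θ hθ
  have hA : DifferentiableAt ℝ (fun t => g t ^ 2 * wTilde g t * deriv q t) θ := by fun_prop
  have hB : DifferentiableAt ℝ (fun t => g t * deriv g t * q t * wTilde g t) θ := by fun_prop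
  have hev : (fun t => wTilde g t * g t ^ ((2 : ℝ) / 3) *
      deriv (fun s => g s ^ (-(β / 3)) * q s) t) =ᶠ[nhds θ]
      (fun t => (g t ^ 2 * wTilde g t * deriv q t
        - β / 3 * (g t * deriv g t * q t * wTilde g t)) * g t ^ (-((β + 4) / 3))) := by
    filter_upwards [hI.mem_nhds hθ] with t ht
    have p := hgpos t ht
    have hd := (((hg t ht).hasDerivAt.rpow_const (p := -(β / 3)) (Or.inl p.ne')).mul
      (hq t ht).hasDerivAt).deriv
    have hd' : deriv (fun s => g s ^ (-(β / 3)) * q s) t = _ := hd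
    rw [hd']
    have e1 : g t ^ (-(β / 3)) = g t ^ (-((β + 4) / 3)) * g t ^ ((4 : ℝ) / 3) := by
      rw [← Real.rpow_add p]; congr 1; ring
    have e2 : g t ^ (-(β / 3) - 1) = g t ^ (-((β + 4) / 3)) * g t ^ ((4 : ℝ) / 3) / g t := by
      rw [Real.rpow_sub_one p.ne', e1]
    have e3 : g t ^ ((2 : ℝ) / 3) * g t ^ ((4 : ℝ) / 3) = g t ^ 2 := by
      rw [← Real.rpow_add p, ← Real.rpow_natCast]; norm_num
    rw [e2, e1]
    have e4 : g t ^ 2 / g t = g t := by field_simp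
    calc _ = (g t ^ ((2 : ℝ) / 3) * g t ^ ((4 : ℝ) / 3)) * wTilde g t * deriv q t
              * g t ^ (-((β + 4) / 3))
            - β / 3 * ((g t ^ ((2 : ℝ) / 3) * g t ^ ((4 : ℝ) / 3)) / g t * deriv g t * q t
              * wTilde g t) * g t ^ (-((β + 4) / 3)) := by ring
      _ = _ := by rw [e3, e4]; ring
  rw [hev.deriv_eq]
  have hD := ((hA.hasDerivAt.sub (hB.hasDerivAt.const_mul (β / 3))).mul
    (h1.hasDerivAt.rpow_const (p := -((β + 4) / 3)) (Or.inl h0.ne'))).deriv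
  have hD' : deriv (fun t => (g t ^ 2 * wTilde g t * deriv q t
        - β / 3 * (g t * deriv g t * q t * wTilde g t)) * g t ^ (-((β + 4) / 3))) θ = _ := hD
  rw [hD', Real.rpow_sub_one h0.ne']
  have e : g θ ^ ((β + 4) / 3) * g θ ^ (-((β + 4) / 3)) = 1 := by
    rw [← Real.rpow_add h0]; simp
  simp only [Pi.sub_apply]
  generalize deriv (fun t => g t ^ 2 * wTilde g t * deriv q t) θ = a
  generalize deriv (fun t => g t * deriv g t * q t * wTilde g t) θ = b
  generalize g θ ^ ((β + 4) / 3) = x at *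
  generalize g θ ^ (-((β + 4) / 3)) = y at *
  symm
  calc _ = (x * y) * (9 * (a - β / 3 * b) - 3 * (β + 4) * deriv g θ *
        ((g θ ^ 2 * wTilde g θ * deriv q θ
        - β / 3 * (g θ * deriv g θ * q θ * wTilde g θ)) / g θ)) := by ring
    _ = _ := by rw [e]; field_simp; ring

/-- The divergence-form identity for the angular part of the model
Jacobi operator on the cone: for `g > 0` and twice differentiable `g, q`,
`9(g² w̃₀ q')' − 3β(g g' q w̃₀)' + w̃₀(β+4)(β g'² q − 3 g g' q')
  = 9 g^{(β+4)/3} ( w̃₀ g^{2/3} (g^{−β/3} q)' )'`,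
and in particular the left-hand side vanishes identically when `q = g^{β/3}`. -/
theorem angular_divergence_identity (I : Set ℝ) (hI : IsOpen I) (hIc : I.OrdConnected)
    (hIsub : I ⊆ Ioo 0 (π / 2)) (g q : ℝ → ℝ) (β : ℝ)
    (hg : ∀ θ ∈ I, DifferentiableAt ℝ g θ)
    (hg' : ∀ θ ∈ I, DifferentiableAt ℝ (deriv g) θ)
    (hq : ∀ θ ∈ I, DifferentiableAt ℝ q θ)
    (hq' : ∀ θ ∈ I, DifferentiableAt ℝ (deriv q) θ)
    (hgpos : ∀ θ ∈ I, 0 < g θ) :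
    (∀ θ ∈ I,
      9 * deriv (fun t => g t ^ 2 * wTilde g t * deriv q t) θ
        - 3 * β * deriv (fun t => g t * deriv g t * q t * wTilde g t) θ
        + wTilde g θ * (β + 4) *
            (β * deriv g θ ^ 2 * q θ - 3 * g θ * deriv g θ * deriv q θ)
      = 9 * g θ ^ ((β + 4) / 3) *
          deriv (fun t => wTilde g t * g t ^ ((2 : ℝ) / 3) *
            deriv (fun s => g s ^ (-(β / 3)) * q s) t) θ) ∧
    (∀ θ ∈ I,
      9 * deriv (fun t => g t ^ 2 * wTilde g t * deriv (fun s => g s ^ (β / 3)) t) θ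
        - 3 * β * deriv (fun t => g t * deriv g t * g t ^ (β / 3) * wTilde g t) θ
        + wTilde g θ * (β + 4) *
            (β * deriv g θ ^ 2 * g θ ^ (β / 3)
              - 3 * g θ * deriv g θ * deriv (fun s => g s ^ (β / 3)) θ)
      = 0) := by
  refine ⟨divergence_aux I hI g q β hg hg' hq hq' hgpos, ?_⟩
  intro θ hθ
  have hd : ∀ t ∈ I, HasDerivAt (fun s => g s ^ (β / 3))
      (deriv g t * (β / 3) * g t ^ (β / 3 - 1)) t := fun t ht =>
    (hg t ht).hasDerivAt.rpow_const (Or.inl (hgpos t ht).ne')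
  have hd2 : ∀ t ∈ I, DifferentiableAt ℝ (deriv (fun s => g s ^ (β / 3))) t := by
    intro t ht
    have hev : deriv (fun s => g s ^ (β / 3)) =ᶠ[nhds t]
        fun u => deriv g u * (β / 3) * g u ^ (β / 3 - 1) := by
      filter_upwards [hI.mem_nhds ht] with u hu
      exact (hd u hu).deriv
    rw [hev.differentiableAt_iff]
    exact ((hg' t ht).mul_const _).mul
      ((hg t ht).rpow_const (Or.inl (hgpos t ht).ne'))
  have key := divergence_aux I hI g (fun s => g s ^ (β / 3)) β hg hg'
    (fun t ht => (hd t ht).differentiableAt) hd2 hgpos θ hθ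
  refine key.trans ?_
  have hz : (fun t => wTilde g t * g t ^ ((2 : ℝ) / 3) *
      deriv (fun s => g s ^ (-(β / 3)) * g s ^ (β / 3)) t) =ᶠ[nhds θ] fun _ => 0 := by
    filter_upwards [hI.mem_nhds hθ] with t ht
    have h1 : (fun s => g s ^ (-(β / 3)) * g s ^ (β / 3)) =ᶠ[nhds t] fun _ => 1 := by
      filter_upwards [hI.mem_nhds ht] with u hu
      rw [← Real.rpow_add (hgpos u hu)]; simp
    rw [h1.deriv_eq]; simp
  rw [hz.deriv_eq]; simp
end
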